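/- Let K be a finite n-dimensional simplicial complex embedded in Euclidean space, with n ≥ 2, let L be a subdivision of K, and let τ^s be an s-simplex of L whose open simplex is contained in the open p-simplex ζ^p of K. Then a_p·K_a(τ^s) = a_s·K_a(ζ^p), where K_a(τ^s) is computed in L and K_a(ζ^p) is computed in K. In particular, if s = p then K_a(τ^p) = K_a(ζ^p). -/

import Mathlib

open Filter MeasureTheory Geometry
open scoped BigOperators

noncomputable section

attribute [local instance 0] Classical.propDecidable

namespace AngleDefectPaper

/-- `N`-dimensional Euclidean space. -/
abbrev Euc (N : ℕ) : Type := EuclideanSpace ℝ (Fin N)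

variable {N : ℕ}

/-- The open simplex determined by a finite set of points: the intrinsic
(relative) interior of its convex hull. -/
def openSimplex (s : Finset (Euc N)) : Set (Euc N) :=
  intrinsicInterior ℝ (convexHull ℝ (s : Set (Euc N)))

/-- The normalized solid angle `α(η, σ)` of the simplex `σ` along its face `η`:
the fraction of a small sphere (in the affine span of `σ`) centered at a point of
the open face `η` that lies in `σ`, normalized so that the full sphere has
measure `1`.  It is computed as the limiting fraction of a small ambient ball
centered at the centroid of `η` that lies in the cylinder obtained by thickening
`σ` in the directions orthogonal to its affine span. -/
def solidAngle (η σ : Finset (Euc N)) : ℝ :=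
  limUnder (nhdsWithin (0 : ℝ) (Set.Ioi 0)) fun ε =>
    (volume (Metric.ball (η.centroid ℝ id) ε ∩
      {y : Euc N | ∃ c ∈ convexHull ℝ (σ : Set (Euc N)),
        ∃ w ∈ (vectorSpan ℝ (σ : Set (Euc N)))ᗮ, y = c + w})).toReal /
    (volume (Metric.ball (η.centroid ℝ id) ε)).toReal

/-- `Tcone r` is (a realization in the plane of) the open cone on `r` points:
`r` half-open segments emanating from the origin in pairwise distinct
directions, glued at the origin.  For `r = 0` it is a single point. -/
def Tcone (r : ℕ) : Set (ℝ × ℝ) :=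
  {0} ∪ ⋃ k ∈ Finset.range r,
    {p : ℝ × ℝ | ∃ t : ℝ, 0 ≤ t ∧ t < 1 ∧ p = t • ((1 : ℝ), (k : ℝ))}

/-- `x` has a neighborhood in `S` homeomorphic to `T_r × ℝ^{n-1}`, with the
homeomorphism taking `x` into the apex set `{cone point} × ℝ^{n-1}`. -/
def HasConeNbhd (n r : ℕ) (S : Set (Euc N)) (x : Euc N) : Prop :=
  ∃ U : Set (Euc N), U ∈ nhdsWithin x S ∧ U ⊆ S ∧
    ∃ h : U ≃ₜ (Tcone r) × EuclideanSpace ℝ (Fin (n - 1)),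
      ∀ hx : x ∈ U, ((h ⟨x, hx⟩).1 : ℝ × ℝ) = 0

/-- The set of points of `|K|` having a neighborhood of cone type `r`. -/
def csetAux (n : ℕ) (K : SimplicialComplex ℝ (Euc N)) (r : ℕ) : Set (Euc N) :=
  {x | x ∈ K.space ∧ HasConeNbhd n r K.space x}

/-- The sets `C_r(K)`: for `r ≠ 2` the points with a cone-type-`r` neighborhood,
and `C_2(K)` is the complement in `|K|` of the union of the others. -/
def cset (n : ℕ) (K : SimplicialComplex ℝ (Euc N)) (r : ℕ) : Set (Euc N) :=
  if r = 2 then K.space \ ⋃ r' ∈ {r' : ℕ | r' ≠ 2}, csetAux n K r'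
  else csetAux n K r

/-- The stratification rank `r(η) = r/2`, where `C_r(K)` is the (unique) set of
the stratification containing the open simplex of `η`. -/
def strRank (n : ℕ) (K : SimplicialComplex ℝ (Euc N)) (η : Finset (Euc N)) : ℝ :=
  if h : ∃ r : ℕ, r ≠ 2 ∧ openSimplex η ⊆ csetAux n K r then (h.choose : ℝ) / 2
  else 1

/-- The set of `n`-simplices of `K` having `η` as a face. -/
def nSimplicesOn (n : ℕ) (K : SimplicialComplex ℝ (Euc N)) (η : Finset (Euc N)) :
    Set (Finset (Euc N)) :=
  {σ | σ ∈ K.faces ∧ σ.card = n + 1 ∧ η ⊆ σ}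

/-- The generalized angle defect `D(η) = r(η) - Σ_{σⁿ ≻ η} α(η, σⁿ)`. -/
def defect (n : ℕ) (K : SimplicialComplex ℝ (Euc N)) (η : Finset (Euc N)) : ℝ :=
  strRank n K η - ∑ᶠ σ ∈ nSimplicesOn n K η, solidAngle η σ

/-- The angle defect sequence `a_m = 4 B_{m+2} (2^{m+2} - 1)/(m+2)`, where `B_k`
is the `k`-th Bernoulli number (with the convention `B_1 = -1/2`). -/
def ads (m : ℕ) : ℚ :=
  4 * bernoulli (m + 2) * (2 ^ (m + 2) - 1) / (m + 2)

/-- The ascending stratified curvature of a simplex `τ` (of dimension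
`p = τ.card - 1`) in the `n`-dimensional complex `K`. -/
def asc (n : ℕ) (K : SimplicialComplex ℝ (Euc N)) (τ : Finset (Euc N)) : ℝ :=
  (ads (τ.card - 1) : ℝ) * defect n K τ +
    (ads (τ.card - 1) : ℝ) / 2 *
      ∑ i ∈ Finset.Icc τ.card n,
        (-1 : ℝ) ^ (i - (τ.card - 1)) *
          ∑ᶠ η ∈ {η : Finset (Euc N) | η ∈ K.faces ∧ η.card = i + 1 ∧ τ ⊆ η},
            defect n K η

/-- The stratified Euler characteristic `χˢ(K) = Σ_{η ∈ K} r(η) (-1)^{dim η}`. -/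
def stratEuler (n : ℕ) (K : SimplicialComplex ℝ (Euc N)) : ℝ :=
  ∑ᶠ η ∈ K.faces, strRank n K η * (-1 : ℝ) ^ (η.card - 1)

/-- `fcount F k` is the number of `k`-dimensional simplices in `F`. -/
def fcount (F : Set (Finset (Euc N))) (k : ℕ) : ℕ :=
  {s ∈ F | s.card = k + 1}.ncard

/-- The combinatorial Euler characteristic `χ(F) = Σ_k (-1)^k f_k(F)`. -/
def eulerChar (F : Set (Finset (Euc N))) : ℤ :=
  ∑ᶠ k : ℕ, (-1 : ℤ) ^ k * fcount F k

/-- The link of `η` in `K`: all simplices `ω` of `K` disjoint from `η` such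
that the join `η ∗ ω` is a simplex of `K`. -/
def linkFaces (K : SimplicialComplex ℝ (Euc N)) (η : Finset (Euc N)) :
    Set (Finset (Euc N)) :=
  {ω | ω ∈ K.faces ∧ Disjoint η ω ∧ η ∪ ω ∈ K.faces}

/-- `K` is an `n`-dimensional simplicial complex. -/
def IsNDim (n : ℕ) (K : SimplicialComplex ℝ (Euc N)) : Prop :=
  (∀ s ∈ K.faces, s.card ≤ n + 1) ∧ ∃ s ∈ K.faces, s.card = n + 1

/-- `L` is a subdivision of `K`: same underlying space, and every open simplex
of `L` is contained in an open simplex of `K`. -/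
def IsSubdivision (K L : SimplicialComplex ℝ (Euc N)) : Prop :=
  L.space = K.space ∧ ∀ s ∈ L.faces, ∃ t ∈ K.faces, openSimplex s ⊆ openSimplex t

/-- affine independence plus nonemptiness -/
def Good (s : Finset (Euc N)) : Prop :=
  s.Nonempty ∧ AffineIndependent ℝ ((↑) : s → Euc N)

lemma exists_bary (s : Finset (Euc N)) (hs : Good s) :
    ∃ (q : Euc N →ᵃ[ℝ] Euc N) (l : Euc N → (Euc N →ᵃ[ℝ] ℝ)),
      (∀ y, y - q y ∈ (vectorSpan ℝ (s : Set (Euc N)))ᗮ) ∧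
      (∀ y, q y ∈ affineSpan ℝ (s : Set (Euc N))) ∧
      (∀ y ∈ affineSpan ℝ (s : Set (Euc N)), q y = y) ∧
      (∀ v ∈ s, ∀ u ∈ s, l v u = if u = v then 1 else 0) ∧
      (∀ v y, l v (q y) = l v y) := by
  obtain ⟨⟨v0, hv0⟩, hind⟩ := hs
  obtain ⟨t, hst, htind, httop⟩ := exists_subset_affineIndependent_affineSpan_eq_top
    (k := ℝ) (s := (s : Set (Euc N))) hind
  let V := vectorSpan ℝ (s : Set (Euc N))
  let b : AffineBasis t ℝ (Euc N) := ⟨((↑) : t → Euc N), htind, by simpa using httop⟩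
  let q : Euc N →ᵃ[ℝ] Euc N :=
    (V.starProjection : Euc N →ₗ[ℝ] Euc N).toAffineMap.comp
      (AffineMap.id ℝ (Euc N) - AffineMap.const ℝ (Euc N) v0) + AffineMap.const ℝ (Euc N) v0
  have hq : ∀ y, q y = V.starProjection (y - v0) + v0 := fun y => by simp [q]
  have hv0' : v0 ∈ affineSpan ℝ (s : Set (Euc N)) := subset_affineSpan ℝ _ hv0
  have hmem : ∀ y, q y ∈ affineSpan ℝ (s : Set (Euc N)) := fun y => by
    rw [hq]
    refine AffineSubspace.vadd_mem_of_mem_direction (v := V.starProjection (y - v0)) ?_ hv0'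
    rw [direction_affineSpan]
    exact Submodule.starProjection_apply_mem _ _
  have hfix : ∀ y ∈ affineSpan ℝ (s : Set (Euc N)), q y = y := fun y hy => by
    have : y - v0 ∈ V := by
      have := AffineSubspace.vsub_mem_direction hy hv0'
      rwa [direction_affineSpan] at this
    rw [hq, Submodule.starProjection_eq_self_iff.2 this]; simp
  refine ⟨q, fun v => if h : v ∈ t then (b.coord ⟨v, h⟩).comp q else 0, ?_, hmem, hfix, ?_, ?_⟩
  · intro y
    have : y - q y = (y - v0) - V.starProjection (y - v0) := by rw [hq]; abel
    rw [this]
    exact Submodule.sub_starProjection_mem_orthogonal _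
  · intro v hv u hu
    have h1 : v ∈ t := hst hv
    have h2 : u ∈ t := hst hu
    simp only [dif_pos h1]
    rw [AffineMap.comp_apply, hfix u (subset_affineSpan ℝ _ hu)]
    have : u = b ⟨u, h2⟩ := rfl
    conv_lhs => rw [this]
    rw [b.coord_apply]
    simp [eq_comm]
  · intro v y
    by_cases h : v ∈ t
    · simp only [dif_pos h, AffineMap.comp_apply]
      rw [hfix _ (hmem y)]
    · simp [h]

/-- orthogonal projection to the affine span -/
def prj (s : Finset (Euc N)) : Euc N →ᵃ[ℝ] Euc N :=
  if h : Good s then (exists_bary s h).choose else 0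

/-- extended barycentric coordinates -/
def lam (s : Finset (Euc N)) : Euc N → (Euc N →ᵃ[ℝ] ℝ) :=
  if h : Good s then (exists_bary s h).choose_spec.choose else 0


lemma bary_spec {s : Finset (Euc N)} (hs : Good s) : (∀ y, y - prj s y ∈ (vectorSpan ℝ (s : Set (Euc N)))ᗮ) ∧
      (∀ y, prj s y ∈ affineSpan ℝ (s : Set (Euc N))) ∧
      (∀ y ∈ affineSpan ℝ (s : Set (Euc N)), prj s y = y) ∧
      (∀ v ∈ s, ∀ u ∈ s, lam s v u = if u = v then 1 else 0) ∧
      (∀ v y, lam s v (prj s y) = lam s v y) := by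
  have := (exists_bary s hs).choose_spec.choose_spec
  simpa only [prj, lam, dif_pos hs] using this

lemma lam_sum_span {s : Finset (Euc N)} (hs : Good s) {x : Euc N} (hx : x ∈ affineSpan ℝ (s : Set (Euc N))) :
    ∑ v ∈ s, lam s v x = 1 ∧ ∑ v ∈ s, lam s v x • v = x := by
  refine affineSpan_induction (p := fun x => ∑ v ∈ s, lam s v x = 1 ∧
    ∑ v ∈ s, lam s v x • v = x) hx ?_ ?_
  · intro x hx
    have hx' : x ∈ s := hx
    have : ∀ v ∈ s, lam s v x = if x = v then 1 else 0 := fun v hv =>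
      (bary_spec hs).2.2.2.1 v hv x hx'
    constructor
    · rw [Finset.sum_congr rfl this]; simp [hx']
    · rw [Finset.sum_congr rfl (fun v hv => by rw [this v hv])]; simp [hx']
  · intro c u v w hu hv hw
    have key : ∀ z, lam s z (c • (u -ᵥ v) +ᵥ w) = c * (lam s z u - lam s z v) + lam s z w := by
      intro z
      rw [AffineMap.map_vadd, map_smul, AffineMap.linearMap_vsub]; simp
    constructor
    · simp only [key, Finset.sum_add_distrib, ← Finset.mul_sum, Finset.sum_sub_distrib, hu.1, hv.1,
        hw.1]; simp
    · simp only [key, add_smul, Finset.sum_add_distrib, mul_smul, ← Finset.smul_sum, sub_smul,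
        Finset.sum_sub_distrib, hu.2, hv.2, hw.2]; simp

lemma lam_sum {s : Finset (Euc N)} (hs : Good s) (y : Euc N) : ∑ v ∈ s, lam s v y = 1 := by
  have := (lam_sum_span hs ((bary_spec hs).2.1 y)).1
  simpa only [(bary_spec hs).2.2.2.2] using this

lemma mem_convexHull_iff_lam {s : Finset (Euc N)} (hs : Good s) {x : Euc N} : x ∈ convexHull ℝ (s : Set (Euc N)) ↔
    x ∈ affineSpan ℝ (s : Set (Euc N)) ∧ ∀ v ∈ s, 0 ≤ lam s v x := by
  constructor
  · intro hx
    refine ⟨convexHull_subset_affineSpan _ hx, fun v hv => ?_⟩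
    have hc : Convex ℝ (lam s v ⁻¹' Set.Ici 0) := (convex_Ici 0).affine_preimage (lam s v)
    refine convexHull_min ?_ hc hx
    intro u hu
    have := (bary_spec hs).2.2.2.1 v hv u hu
    simp only [Set.mem_preimage, Set.mem_Ici, this]
    split_ifs <;> simp
  · rintro ⟨hx, h⟩
    have := lam_sum_span hs hx
    rw [← this.2]
    exact (convex_convexHull ℝ _).sum_mem h this.1 (fun v hv => subset_convexHull ℝ _ hv)

lemma lam_cont {s : Finset (Euc N)} (v : Euc N) : Continuous (lam s v) := (lam s v).continuous_of_finiteDimensional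

lemma prj_cont {s : Finset (Euc N)} : Continuous (prj s) := (prj s).continuous_of_finiteDimensional

lemma mem_openSimplex_iff_lam {s : Finset (Euc N)} (hs : Good s) {x : Euc N} : x ∈ openSimplex s ↔
    x ∈ affineSpan ℝ (s : Set (Euc N)) ∧ ∀ v ∈ s, 0 < lam s v x := by
  constructor
  · intro hx
    rw [openSimplex, mem_intrinsicInterior] at hx
    obtain ⟨⟨y, hy'⟩, hy, rfl⟩ := hx
    have hyc := interior_subset hy
    have hyc' := (mem_convexHull_iff_lam hs).1 hyc
    refine ⟨hyc'.1, fun v hv => ?_⟩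
    rcases (hyc'.2 v hv).lt_or_eq with h | h
    · exact h
    exfalso
    have hv' : v ∈ affineSpan ℝ (convexHull ℝ (s : Set (Euc N))) :=
      subset_affineSpan ℝ _ (subset_convexHull ℝ _ hv)
    let g : ℝ → affineSpan ℝ (convexHull ℝ (s : Set (Euc N))) := fun t =>
      ⟨AffineMap.lineMap v y t, AffineMap.lineMap_mem t hv' hy'⟩
    have hg : Continuous g := by
      refine Continuous.subtype_mk ?_ _
      exact AffineMap.lineMap_continuous
    have hg1 : g 1 = ⟨y, hy'⟩ := by simp [g]
    have h1 : ∀ᶠ t in nhds (1 : ℝ), g t ∈ ((↑) ⁻¹' (convexHull ℝ (s : Set (Euc N))) :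
        Set (affineSpan ℝ (convexHull ℝ (s : Set (Euc N))))) := by
      apply hg.continuousAt.eventually
      rw [hg1]
      exact mem_interior_iff_mem_nhds.1 hy
    have h2 : ∀ᶠ t in nhdsWithin (1 : ℝ) (Set.Ioi 1), 1 < t := self_mem_nhdsWithin
    obtain ⟨t, ht, ht1⟩ := ((h1.filter_mono nhdsWithin_le_nhds).and h2).exists
    have h3 := ((mem_convexHull_iff_lam hs).1 ht).2 v hv
    have h4 : lam s v (g t) = AffineMap.lineMap (lam s v v) (lam s v y) t :=
      AffineMap.apply_lineMap _ _ _ _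
    have h5 := (bary_spec hs).2.2.2.1 v hv v hv
    simp only at h
    rw [h4, h5, ← h] at h3
    simp [AffineMap.lineMap_apply] at h3
    linarith
  · rintro ⟨hx, h⟩
    rw [openSimplex, mem_intrinsicInterior]
    have hxc : x ∈ convexHull ℝ (s : Set (Euc N)) :=
      (mem_convexHull_iff_lam hs).2 ⟨hx, fun v hv => (h v hv).le⟩
    refine ⟨⟨x, subset_affineSpan ℝ _ hxc⟩, ?_, rfl⟩
    rw [mem_interior_iff_mem_nhds]
    have : ∀ᶠ y : affineSpan ℝ (convexHull ℝ (s : Set (Euc N))) in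
        nhds ⟨x, subset_affineSpan ℝ _ hxc⟩, ∀ v ∈ s, 0 < lam s v y := by
      rw [Filter.eventually_all_finset]
      intro v hv
      have hc : Continuous fun y : affineSpan ℝ (convexHull ℝ (s : Set (Euc N))) =>
        lam s v y := (lam_cont v).comp continuous_subtype_val
      exact hc.continuousAt.eventually (lt_mem_nhds (h v hv))
    filter_upwards [this] with y hy
    refine (mem_convexHull_iff_lam hs).2 ⟨?_, fun v hv => (hy v hv).le⟩
    exact (affineSpan_convexHull (𝕜 := ℝ) (s : Set (Euc N))).le y.2

lemma openSimplex_subset {s : Finset (Euc N)} : openSimplex s ⊆ convexHull ℝ (s : Set (Euc N)) :=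
  intrinsicInterior_subset

lemma centroid_mem {s : Finset (Euc N)} (hs : Good s) : s.centroid ℝ id ∈ openSimplex s := by
  rw [mem_openSimplex_iff_lam hs]
  have hne := hs.1
  have h1 : s.centroid ℝ id ∈ affineSpan ℝ (s : Set (Euc N)) := by
    exact convexHull_subset_affineSpan _ (s.centroid_mem_convexHull hne)
  refine ⟨h1, fun v hv => ?_⟩
  rw [Finset.centroid, Finset.map_affineCombination _ _ _
    (Finset.sum_centroidWeights_eq_one_of_nonempty ℝ s hne),
    Finset.affineCombination_eq_linear_combination _ _ _
    (Finset.sum_centroidWeights_eq_one_of_nonempty ℝ s hne)]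
  have : ∀ u ∈ s, s.centroidWeights ℝ u • (lam s v ∘ id) u =
      (s.card : ℝ)⁻¹ * if u = v then 1 else 0 := fun u hu => by
    simp only [Function.comp, id, (bary_spec hs).2.2.2.1 v hv u hu, Finset.centroidWeights_apply,
      smul_eq_mul]
  rw [Finset.sum_congr rfl this]
  simp [hv, hne.card_pos]

/-- the segment from a point of the closed simplex to an open one is open -/
lemma lineMap_mem_open {s : Finset (Euc N)} (hs : Good s) {x z : Euc N} (hx : x ∈ convexHull ℝ (s : Set (Euc N)))
    (hz : z ∈ openSimplex s) {t : ℝ} (h0 : 0 < t) (h1 : t ≤ 1) :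
    AffineMap.lineMap x z t ∈ openSimplex s := by
  rw [mem_convexHull_iff_lam hs] at hx
  rw [mem_openSimplex_iff_lam hs] at hz ⊢
  refine ⟨AffineMap.lineMap_mem t hx.1 hz.1, fun v hv => ?_⟩
  rw [AffineMap.apply_lineMap, AffineMap.lineMap_apply]
  have h2 := hx.2 v hv
  have h3 := hz.2 v hv
  simp only [vsub_eq_sub, smul_eq_mul, vadd_eq_add]
  nlinarith [mul_pos h0 h3]

lemma convexHull_subset_of_open {s : Finset (Euc N)} (hs : Good s) {t : Finset (Euc N)} 
    (h : openSimplex s ⊆ convexHull ℝ (t : Set (Euc N))) :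
    convexHull ℝ (s : Set (Euc N)) ⊆ convexHull ℝ (t : Set (Euc N)) := by
  intro x hx
  have hcl : IsClosed (convexHull ℝ (t : Set (Euc N))) := t.finite_toSet.isClosed_convexHull ℝ
  have hz := centroid_mem hs
  set z := s.centroid ℝ id
  have hcont : Tendsto (fun u : ℝ => AffineMap.lineMap x z u) (nhdsWithin 0 (Set.Ioi 0))
      (nhds x) := by
    have : Continuous (fun u : ℝ => (AffineMap.lineMap x z u : Euc N)) :=
      AffineMap.lineMap_continuous
    have h := (this.tendsto 0)
    rw [AffineMap.lineMap_apply_zero] at h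
    exact h.mono_left nhdsWithin_le_nhds
  refine hcl.mem_of_tendsto hcont ?_
  have h1 : ∀ᶠ u in nhdsWithin (0 : ℝ) (Set.Ioi 0), 0 < u := self_mem_nhdsWithin
  have h2 : ∀ᶠ u in nhdsWithin (0 : ℝ) (Set.Ioi 0), u < 1 :=
    nhdsWithin_le_nhds (gt_mem_nhds one_pos)
  filter_upwards [h1, h2] with u hu hu'
  exact h (lineMap_mem_open hs hx hz hu hu'.le)

/-- coordinates of a point of an open face -/
lemma lam_face {s : Finset (Euc N)} (hs : Good s) {t : Finset (Euc N)} (ht : t ⊆ s) (htg : Good t) {x : Euc N} (hx : x ∈ openSimplex t) :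
    (∀ v ∈ t, 0 < lam s v x) ∧ (∀ v ∈ s \ t, lam s v x = 0) ∧
      x ∈ affineSpan ℝ (s : Set (Euc N)) := by
  have hx' := (mem_openSimplex_iff_lam htg).1 hx
  have hsp := lam_sum_span htg hx'.1
  have key : ∀ v ∈ s, lam s v x = if v ∈ t then lam t v x else 0 := by
    intro v hv
    have h1 : lam s v x = ∑ u ∈ t, lam t u x * lam s v u := by
      have : x = t.affineCombination ℝ (id : Euc N → Euc N) (fun u => lam t u x) := by
        rw [Finset.affineCombination_eq_linear_combination _ _ _ hsp.1]
        simpa using hsp.2.symm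
      conv_lhs => rw [this]
      rw [Finset.map_affineCombination _ _ _ hsp.1,
        Finset.affineCombination_eq_linear_combination _ _ _ hsp.1]
      simp
    rw [h1, Finset.sum_congr rfl (fun u hu => by
      rw [(bary_spec hs).2.2.2.1 v hv u (ht hu)])]
    simp
  refine ⟨fun v hv => ?_, fun v hv => ?_, affineSpan_mono ℝ (by exact_mod_cast ht) hx'.1⟩
  · rw [key v (ht hv), if_pos hv]; exact hx'.2 v hv
  · rw [Finset.mem_sdiff] at hv
    rw [key v hv.1, if_neg hv.2]

lemma lam_linear_prj {s : Finset (Euc N)} (hs : Good s) (v y : Euc N) (hy : y ∈ (vectorSpan ℝ (s : Set (Euc N)))ᗮ) (x : Euc N) :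
    lam s v (x + y) = lam s v x := by
  rw [← (bary_spec hs).2.2.2.2 v (x + y), ← (bary_spec hs).2.2.2.2 v x]
  congr 1
  have h1 := (bary_spec hs).1 (x + y)
  have h2 := (bary_spec hs).1 x
  have h3 : prj s (x + y) - prj s x ∈ (vectorSpan ℝ (s : Set (Euc N)))ᗮ := by
    have : prj s (x + y) - prj s x = (x - prj s x) - (x + y - prj s (x + y)) + y := by abel
    rw [this]
    exact Submodule.add_mem _ (Submodule.sub_mem _ h2 h1) hy
  have h4 : prj s (x + y) - prj s x ∈ vectorSpan ℝ (s : Set (Euc N)) := by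
    rw [← direction_affineSpan]
    exact AffineSubspace.vsub_mem_direction ((bary_spec hs).2.1 _) ((bary_spec hs).2.1 _)
  have := Submodule.disjoint_def.1 (Submodule.orthogonal_disjoint _) _ h4 h3
  exact sub_eq_zero.1 this

/-- the cylinder in the definition of the solid angle -/
lemma cyl_eq {s : Finset (Euc N)} (hs : Good s) : {y : Euc N | ∃ c ∈ convexHull ℝ (s : Set (Euc N)),
        ∃ w ∈ (vectorSpan ℝ (s : Set (Euc N)))ᗮ, y = c + w} = {y | ∀ v ∈ s, 0 ≤ lam s v y} := by
  ext y
  simp only [Set.mem_ofPred_eq]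
  constructor
  · rintro ⟨c, hc, w, hw, rfl⟩ v hv
    rw [lam_linear_prj hs v w hw]
    exact ((mem_convexHull_iff_lam hs).1 hc).2 v hv
  · intro h
    refine ⟨prj s y, ?_, y - prj s y, (bary_spec hs).1 y, by abel⟩
    rw [mem_convexHull_iff_lam hs]
    refine ⟨(bary_spec hs).2.1 y, fun v hv => ?_⟩
    rw [(bary_spec hs).2.2.2.2]; exact h v hv

section
open scoped Pointwise

/-- normalized volume of the cone where the coordinates in `S` are nonnegative -/
def msr (σ S : Finset (Euc N)) : ℝ :=
  (volume (Metric.ball (0 : Euc N) 1 ∩ {y | ∀ v ∈ S, 0 ≤ (lam σ v).linear y})).toReal /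
    (volume (Metric.ball (0 : Euc N) 1)).toReal

lemma vol_scale (x : Euc N) {ε : ℝ} (hε : 0 < ε) (A : Set (Euc N)) :
    (volume ((fun y => x + y) '' (ε • A))).toReal = ε ^ N * (volume A).toReal := by
  rw [Set.image_add_left, measure_preimage_add, Measure.addHaar_smul]
  simp [abs_of_pos hε, hε.le]

lemma ball_scale (x : Euc N) {ε : ℝ} (hε : 0 < ε) (P : Euc N → Prop) (hP : ∀ y, P (ε • y) ↔ P y) :
    Metric.ball x ε ∩ {y | P (y - x)} = (fun y => x + y) '' (ε • (Metric.ball 0 1 ∩ {y | P y})) := by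
  ext z
  simp only [Set.mem_inter_iff, Metric.mem_ball, Set.mem_ofPred_eq, Set.mem_image]
  constructor
  · rintro ⟨h1, h2⟩
    refine ⟨z - x, ?_, by abel⟩
    rw [Set.mem_smul_set_iff_inv_smul_mem₀ hε.ne']
    refine ⟨?_, ?_⟩
    · rw [mem_ball_zero_iff, norm_smul, norm_inv, Real.norm_of_nonneg hε.le, ← dist_eq_norm,
        inv_mul_lt_iff₀ hε]
      simpa using h1
    · show P _
      rw [← hP, smul_inv_smul₀ hε.ne']; exact h2
  · rintro ⟨w, hw, rfl⟩
    obtain ⟨y, ⟨hy1, hy2⟩, rfl⟩ := hw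
    rw [mem_ball_zero_iff] at hy1
    constructor
    · rw [dist_eq_norm]
      simp only [add_sub_cancel_left, norm_smul, Real.norm_of_nonneg hε.le]
      nlinarith
    · simp only [add_sub_cancel_left]
      rw [hP]; exact hy2

lemma lam_sub (σ : Finset (Euc N)) (v x y : Euc N) :
    lam σ v y = (lam σ v).linear (y - x) + lam σ v x := by
  have := (lam σ v).map_vadd x (y - x)
  simpa using this

lemma ratio_eventually {σ η : Finset (Euc N)} (hσ : Good σ) (hη : Good η) (hsub : η ⊆ σ)
    {x : Euc N} (hx : x ∈ openSimplex η) :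
    ∀ᶠ ε in nhdsWithin (0 : ℝ) (Set.Ioi 0),
      (volume (Metric.ball x ε ∩ {y | ∀ v ∈ σ, 0 ≤ lam σ v y})).toReal /
        (volume (Metric.ball x ε)).toReal = msr σ (σ \ η) := by
  obtain ⟨h1, h2, -⟩ := lam_face hσ hsub hη hx
  have hev : ∀ᶠ y in nhds x, ∀ v ∈ η, 0 < lam σ v y := by
    rw [Filter.eventually_all_finset]
    intro v hv
    exact (lam_cont v).continuousAt.eventually (lt_mem_nhds (h1 v hv))
  obtain ⟨δ, hδ, hball⟩ := Metric.eventually_nhds_iff_ball.1 hev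
  have e1 : ∀ᶠ ε in nhdsWithin (0 : ℝ) (Set.Ioi 0), 0 < ε := self_mem_nhdsWithin
  have e2 : ∀ᶠ ε in nhdsWithin (0 : ℝ) (Set.Ioi 0), ε < δ :=
    nhdsWithin_le_nhds (gt_mem_nhds hδ)
  filter_upwards [e1, e2] with ε hε hεδ
  have hset : Metric.ball x ε ∩ {y | ∀ v ∈ σ, 0 ≤ lam σ v y} =
      Metric.ball x ε ∩ {y | ∀ v ∈ σ \ η, 0 ≤ (lam σ v).linear (y - x)} := by
    ext y
    simp only [Set.mem_inter_iff, Set.mem_ofPred_eq, and_congr_right_iff]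
    intro hy
    constructor
    · intro h v hv
      have := h v (Finset.mem_sdiff.1 hv).1
      rwa [lam_sub σ v x y, h2 v hv, add_zero] at this
    · intro h v hv
      by_cases hvη : v ∈ η
      · exact (hball y (Metric.ball_subset_ball hεδ.le hy) v hvη).le
      · have hv' : v ∈ σ \ η := Finset.mem_sdiff.2 ⟨hv, hvη⟩
        rw [lam_sub σ v x y, h2 v hv', add_zero]; exact h v hv'
  rw [hset, ball_scale x hε (fun y => ∀ v ∈ σ \ η, 0 ≤ (lam σ v).linear y), vol_scale x hε]
  · have := ball_scale x hε (fun y => True) (by simp)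
    simp only [Set.ofPred_true, Set.inter_univ] at this
    rw [this, vol_scale x hε, msr]
    rw [mul_div_mul_left _ _ (pow_pos hε N).ne']
  · intro y
    refine forall₂_congr fun v hv => ?_
    rw [map_smul, smul_eq_mul, mul_nonneg_iff_of_pos_left hε]

lemma solidAngle_eq {σ η : Finset (Euc N)} (hσ : Good σ) (hη : Good η) (hsub : η ⊆ σ) :
    solidAngle η σ = msr σ (σ \ η) := by
  unfold solidAngle
  apply Tendsto.limUnder_eq
  refine Tendsto.congr' ?_ tendsto_const_nhds
  filter_upwards [ratio_eventually hσ hη hsub (centroid_mem hη)] with ε hε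
  rw [cyl_eq hσ]; exact hε.symm

lemma incl_excl {X : Type*} [MeasurableSpace X] (μ : Measure X) {ι : Type*} (H : ι → Set X)
    (hH : ∀ i, MeasurableSet (H i)) (F : Finset ι) :
    ∀ (A : Set X), μ A ≠ ⊤ →
    (μ (A ∩ {y | ∀ v ∈ F, y ∉ H v})).toReal =
      ∑ S ∈ F.powerset, (-1 : ℝ) ^ S.card * (μ (A ∩ {y | ∀ v ∈ S, y ∈ H v})).toReal := by
  induction F using Finset.induction_on with
  | empty => intro A hA; simp
  | insert a F ha ih =>
    intro A hA
    rw [Finset.sum_powerset_insert ha]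
    have hA2 : μ (A ∩ H a) ≠ ⊤ := ne_top_of_le_ne_top hA (measure_mono Set.inter_subset_left)
    have e1 := ih A hA
    have e2 := ih (A ∩ H a) hA2
    have e3 : ∀ S ∈ F.powerset, (-1 : ℝ) ^ (insert a S).card *
        (μ (A ∩ {y | ∀ v ∈ insert a S, y ∈ H v})).toReal =
        - ((-1 : ℝ) ^ S.card * (μ (A ∩ H a ∩ {y | ∀ v ∈ S, y ∈ H v})).toReal) := by
      intro S hS
      have haS : a ∉ S := fun h => ha (Finset.mem_powerset.1 hS h)
      rw [Finset.card_insert_of_notMem haS, pow_succ]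
      have : A ∩ {y | ∀ v ∈ insert a S, y ∈ H v} = A ∩ H a ∩ {y | ∀ v ∈ S, y ∈ H v} := by
        ext y; simp [and_assoc]
      rw [this]; ring
    rw [Finset.sum_congr rfl e3, Finset.sum_neg_distrib, ← e1, ← e2]
    have hB : μ (A ∩ {y | ∀ v ∈ F, y ∉ H v}) ≠ ⊤ :=
      ne_top_of_le_ne_top hA (measure_mono Set.inter_subset_left)
    have h4 := measure_inter_add_sdiff (μ := μ) (A ∩ {y | ∀ v ∈ F, y ∉ H v}) (hH a)
    have h5 : A ∩ {y | ∀ v ∈ F, y ∉ H v} ∩ H a = A ∩ H a ∩ {y | ∀ v ∈ F, y ∉ H v} := by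
      rw [Set.inter_right_comm]
    have h6 : (A ∩ {y | ∀ v ∈ F, y ∉ H v}) \ H a = A ∩ {y | ∀ v ∈ insert a F, y ∉ H v} := by
      ext y; simp; tauto
    rw [h5, h6] at h4
    rw [← h4, ENNReal.toReal_add]
    · ring
    · exact ne_top_of_le_ne_top hA2 (measure_mono Set.inter_subset_left)
    · exact ne_top_of_le_ne_top hA (measure_mono Set.inter_subset_left)

lemma lam_linear_ne {σ : Finset (Euc N)} (hσ : Good σ) {v u : Euc N} (hv : v ∈ σ) (hu : u ∈ σ)
    (hne : u ≠ v) : (lam σ v).linear (u - v) = -1 := by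
  have := lam_sub σ v v u
  rw [(bary_spec hσ).2.2.2.1 v hv u hu, (bary_spec hσ).2.2.2.1 v hv v hv, if_neg hne,
    if_pos rfl] at this
  linarith

lemma null_linear {σ : Finset (Euc N)} (hσ : Good σ) {v u : Euc N} (hv : v ∈ σ) (hu : u ∈ σ)
    (hne : u ≠ v) : volume {y : Euc N | (lam σ v).linear y = 0} = 0 := by
  have : {y : Euc N | (lam σ v).linear y = 0} = (LinearMap.ker (lam σ v).linear : Set (Euc N)) := by
    ext; simp
  rw [this]
  apply Measure.addHaar_submodule
  intro h
  have h1 : (u - v) ∈ LinearMap.ker (lam σ v).linear := by rw [h]; trivial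
  rw [LinearMap.mem_ker, lam_linear_ne hσ hv hu hne] at h1
  norm_num at h1

lemma sommerville {σ τ : Finset (Euc N)} (hσ : Good σ) (hτ : τ.Nonempty) (hsub : τ ⊆ σ) :
    ∑ S ∈ (σ \ τ).powerset, (-1 : ℝ) ^ S.card * msr σ S = msr σ (σ \ τ) := by
  simp only [msr, ← mul_div_assoc]
  rw [← Finset.sum_div]
  congr 1
  have hH : ∀ v, MeasurableSet {y | 0 ≤ (lam σ v).linear y} := fun v =>
    (isClosed_le continuous_const (lam σ v).linear.continuous_of_finiteDimensional).measurableSet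
  have := incl_excl volume (fun v => {y | 0 ≤ (lam σ v).linear y}) hH (σ \ τ) (Metric.ball 0 1)
    measure_ball_lt_top.ne
  simp only [Set.mem_ofPred_eq] at this
  rw [← this]
  congr 1
  obtain ⟨u, hu⟩ := hτ
  have h1 : Metric.ball (0 : Euc N) 1 ∩ {y | ∀ v ∈ σ \ τ, ¬ 0 ≤ (lam σ v).linear y} =
      (fun y => -y) ⁻¹' (Metric.ball (0 : Euc N) 1 ∩ {y | ∀ v ∈ σ \ τ, 0 < (lam σ v).linear y}) := by
    ext y; simp
  rw [h1]
  have h2 := Measure.measure_preimage_neg (volume : Measure (Euc N))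
    (Metric.ball (0 : Euc N) 1 ∩ {y | ∀ v ∈ σ \ τ, 0 < (lam σ v).linear y})
  have h3 : ∀ A : Set (Euc N), volume ((fun y => -y) ⁻¹' A) = volume A :=
    fun A => Measure.measure_preimage_neg (volume : Measure (Euc N)) A
  rw [h3]
  apply measure_congr
  have hall : ∀ v ∈ σ \ τ, ∀ᵐ y : Euc N, (lam σ v).linear y ≠ 0 := by
    intro v hv
    rw [Finset.mem_sdiff] at hv
    have := null_linear hσ hv.1 (hsub hu) (fun h => hv.2 (h ▸ hu))
    rw [ae_iff]; simpa using this
  have hall' : ∀ᵐ y : Euc N, ∀ v ∈ σ \ τ, (lam σ v).linear y ≠ 0 :=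
    (Filter.eventually_all_finset _).2 hall
  filter_upwards [hall'] with y hy
  apply propext
  show (y ∈ Metric.ball 0 1 ∧ ∀ v ∈ σ \ τ, 0 < (lam σ v).linear y) ↔
    (y ∈ Metric.ball 0 1 ∧ ∀ v ∈ σ \ τ, 0 ≤ (lam σ v).linear y)
  refine and_congr_right fun _ => forall₂_congr fun v hv => ?_
  exact ⟨fun h => h.le, fun h => lt_of_le_of_ne h (hy v hv).symm⟩

lemma angle_relation {σ τ : Finset (Euc N)} (hσ : Good σ) (hτ : τ.Nonempty) (hsub : τ ⊆ σ) :
    ∑ η ∈ σ.powerset with τ ⊆ η, (-1 : ℝ) ^ (η.card + τ.card) * solidAngle η σ =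
      (-1 : ℝ) ^ (σ.card + τ.card) * solidAngle τ σ := by
  have good : ∀ η, η ⊆ σ → τ ⊆ η → Good η := fun η h1 h2 =>
    ⟨hτ.mono h2, hσ.2.mono (by exact_mod_cast h1)⟩
  rw [solidAngle_eq hσ (good τ hsub subset_rfl) hsub, ← sommerville hσ hτ hsub, Finset.mul_sum]
  refine Finset.sum_bij' (fun η _ => σ \ η) (fun S _ => σ \ S) ?_ ?_ ?_ ?_ ?_
  · intro η hη
    rw [Finset.mem_filter, Finset.mem_powerset] at hη
    rw [Finset.mem_powerset]
    exact Finset.sdiff_subset_sdiff subset_rfl hη.2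
  · intro S hS
    rw [Finset.mem_powerset] at hS
    rw [Finset.mem_filter, Finset.mem_powerset]
    refine ⟨Finset.sdiff_subset, fun v hv => ?_⟩
    rw [Finset.mem_sdiff]
    exact ⟨hsub hv, fun h => (Finset.mem_sdiff.1 (hS h)).2 hv⟩
  · intro η hη
    rw [Finset.mem_filter, Finset.mem_powerset] at hη
    simp [hη.1]
  · intro S hS
    rw [Finset.mem_powerset] at hS
    simp [hS.trans Finset.sdiff_subset]
  · intro η hη
    rw [Finset.mem_filter, Finset.mem_powerset] at hη
    rw [solidAngle_eq hσ (good η hη.1 hη.2) hη.1]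
    have := Finset.card_sdiff_add_card_eq_card hη.1
    rw [← mul_assoc, ← pow_add]
    congr 1
    rw [← this]
    have : (σ \ η).card + η.card + τ.card + (σ \ η).card = 2 * (σ \ η).card + (η.card + τ.card) := by
      ring
    rw [this, pow_add _ (2 * _), pow_mul]; simp

end

/-- (algebraically) relatively open convex sets -/
def RO (C : Set (Euc N)) : Prop :=
  Convex ℝ C ∧ ∀ x ∈ C, ∀ y ∈ C, ∃ ε : ℝ, 0 < ε ∧ x + ε • (x - y) ∈ C

/-- Euler characteristic (with compact supports) of a relatively open convex set -/
def echi (C : Set (Euc N)) : ℝ :=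
  if C.Nonempty then (-1 : ℝ) ^ Module.finrank ℝ (vectorSpan ℝ C) else 0

lemma RO.extend {C : Set (Euc N)} (hC : RO C) {x y : Euc N} (hx : x ∈ C) (hy : y ∈ C) :
    ∃ ε : ℝ, 0 < ε ∧ ∀ t, |t| ≤ ε → x + t • (y - x) ∈ C := by
  obtain ⟨ε, hε, h⟩ := hC.2 x hx y hy
  refine ⟨min ε 1, lt_min hε one_pos, fun t ht => ?_⟩
  rw [abs_le] at ht
  have h1 : -ε ≤ t := by linarith [min_le_left ε 1]
  have h2 : t ≤ 1 := by linarith [min_le_right ε 1]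
  -- the point lies on the segment between `x + ε (x - y)` and `y`
  have hpos : 0 < 1 + ε := by linarith
  have : ((1 - t) / (1 + ε)) • (x + ε • (x - y)) + ((t + ε) / (1 + ε)) • y ∈ C := hC.1 h hy
    (div_nonneg (by linarith) hpos.le) (div_nonneg (by linarith) hpos.le)
    (by field_simp; ring)
  convert this using 1
  have e1 : x + t • (y - x) = (1 - t) • x + t • y := by module
  have e2 : ((1 - t) / (1 + ε)) • (x + ε • (x - y)) + ((t + ε) / (1 + ε)) • y =
      ((1 - t) / (1 + ε) * (1 + ε)) • x + ((t + ε) / (1 + ε) - (1 - t) / (1 + ε) * ε) • y := by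
    module
  rw [e1, e2]
  congr 2
  · field_simp
  · field_simp; ring

lemma RO.inter {C D : Set (Euc N)} (hC : RO C) (hD : RO D) : RO (C ∩ D) := by
  refine ⟨hC.1.inter hD.1, fun x hx y hy => ?_⟩
  obtain ⟨ε, hε, h⟩ := hC.extend hx.1 hy.1
  obtain ⟨δ, hδ, h'⟩ := hD.extend hx.2 hy.2
  have hm : 0 < min ε δ := lt_min hε hδ
  refine ⟨min ε δ, hm, ?_⟩
  have e : x + min ε δ • (x - y) = x + (-min ε δ) • (y - x) := by module
  rw [e]
  constructor
  · apply h; rw [abs_neg, abs_of_pos hm]; exact min_le_left _ _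
  · apply h'; rw [abs_neg, abs_of_pos hm]; exact min_le_right _ _

lemma RO.slice (k : Fin N) (t : ℝ) : RO {x : Euc N | x k = t} := by
  refine ⟨?_, fun x hx y hy => ⟨1, one_pos, ?_⟩⟩
  · intro x hx y hy a b ha hb hab
    simp only [Set.mem_ofPred_eq] at *
    simp [hx, hy, ← add_mul, hab]
  · simp only [Set.mem_ofPred_eq] at *
    simp [hx, hy]

lemma RO.absorb {C : Set (Euc N)} (hC : RO C) {x v : Euc N} (hx : x ∈ C)
    (hv : v ∈ vectorSpan ℝ C) : ∃ ε : ℝ, 0 < ε ∧ ∀ t, |t| ≤ ε → x + t • v ∈ C := by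
  have key : ∀ v ∈ Submodule.span ℝ ((fun y => y - x) '' C),
      ∃ ε : ℝ, 0 < ε ∧ ∀ t, |t| ≤ ε → x + t • v ∈ C := by
    intro v hv
    induction hv using Submodule.span_induction with
    | mem v hv =>
      obtain ⟨y, hy, rfl⟩ := hv
      exact hC.extend hx hy
    | zero => exact ⟨1, one_pos, fun t _ => by simpa using hx⟩
    | add u w _ _ hu hw =>
      obtain ⟨ε, hε, h⟩ := hu
      obtain ⟨δ, hδ, h'⟩ := hw
      refine ⟨min ε δ / 2, by positivity, fun t ht => ?_⟩
      have e : x + t • (u + w) = (1 / 2 : ℝ) • (x + (2 * t) • u) + (1 / 2 : ℝ) • (x + (2 * t) • w) := by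
        module
      rw [e]
      have h2 : |2 * t| ≤ min ε δ := by
        rw [abs_mul, abs_two]; linarith
      exact hC.1 (h _ (h2.trans (min_le_left _ _))) (h' _ (h2.trans (min_le_right _ _)))
        (by norm_num) (by norm_num) (by norm_num)
    | smul c u _ hu =>
      obtain ⟨ε, hε, h⟩ := hu
      refine ⟨ε / (|c| + 1), by positivity, fun t ht => ?_⟩
      rw [smul_smul]
      apply h
      rw [abs_mul]
      have h1 : (0 : ℝ) < |c| + 1 := by positivity
      rw [le_div_iff₀ h1] at ht
      nlinarith [abs_nonneg t, abs_nonneg c]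
  apply key
  have := vectorSpan_eq_span_vsub_set_right ℝ hx
  rw [this] at hv
  exact hv

/-- the coordinate functional -/
def cf (k : Fin N) : Euc N →ₗ[ℝ] ℝ := (EuclideanSpace.proj k : Euc N →L[ℝ] ℝ)

lemma cf_apply (k : Fin N) (x : Euc N) : cf k x = x k := rfl

lemma echi_slice {C : Set (Euc N)} (hC : RO C) (k : Fin N) {u w : Euc N} (hu : u ∈ C) (hw : w ∈ C)
    (hne : u k ≠ w k) {t : ℝ} (ht : (C ∩ {x | x k = t}).Nonempty) :
    echi (C ∩ {x | x k = t}) = - echi C := by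
  rw [echi, echi, if_pos ht, if_pos ⟨u, hu⟩]
  obtain ⟨x, hx, hxt⟩ := ht
  have hspan : vectorSpan ℝ (C ∩ {x | x k = t}) =
      (LinearMap.ker ((cf k).comp (vectorSpan ℝ C).subtype)).map (vectorSpan ℝ C).subtype := by
    apply le_antisymm
    · rw [vectorSpan_def, Submodule.span_le]
      rintro v ⟨a, ha, b, hb, rfl⟩
      have hab : a -ᵥ b ∈ vectorSpan ℝ C := vsub_mem_vectorSpan ℝ ha.1 hb.1
      refine ⟨⟨a -ᵥ b, hab⟩, ?_, rfl⟩
      have h1 : a k = t := ha.2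
      have h2 : b k = t := hb.2
      simp [cf_apply, h1, h2]
    · rintro v ⟨⟨v', hv'⟩, hv, rfl⟩
      obtain ⟨ε, hε, h⟩ := hC.absorb hx hv'
      have hz : v' k = 0 := by simpa [cf_apply] using hv
      have h1 : x + ε • v' ∈ C ∩ {x | x k = t} := by
        refine ⟨h ε (abs_of_pos hε).le, ?_⟩
        simp only [Set.mem_ofPred_eq] at hxt ⊢
        simp [hz, hxt]
      have h2 := vsub_mem_vectorSpan ℝ h1 (show x ∈ C ∩ {x | x k = t} from ⟨hx, hxt⟩)
      simp only [vsub_eq_sub, add_sub_cancel_left] at h2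
      have := Submodule.smul_mem _ ε⁻¹ h2
      rwa [smul_smul, inv_mul_cancel₀ hε.ne', one_smul] at this
  have hrank := LinearMap.finrank_range_add_finrank_ker ((cf k).comp (vectorSpan ℝ C).subtype)
  have hsurj : LinearMap.range ((cf k).comp (vectorSpan ℝ C).subtype) = ⊤ := by
    rw [LinearMap.range_eq_top]
    intro c
    have huw : u -ᵥ w ∈ vectorSpan ℝ C := vsub_mem_vectorSpan ℝ hu hw
    refine ⟨(c / (u k - w k)) • ⟨u -ᵥ w, huw⟩, ?_⟩
    have : u k - w k ≠ 0 := sub_ne_zero.2 hne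
    simp only [map_smul, LinearMap.comp_apply, Submodule.subtype_apply, cf_apply, vsub_eq_sub,
      PiLp.sub_apply, smul_eq_mul]
    field_simp
  rw [hsurj, finrank_top, Module.finrank_self] at hrank
  rw [hspan, Submodule.finrank_map_subtype_eq, ← hrank, pow_add]
  ring

/-- `δ` is smaller than all gaps of `T` -/
def Gap (T : Finset ℝ) (δ : ℝ) : Prop := 0 < δ ∧ ∀ t ∈ T, ∀ t' ∈ T, t < t' → t + δ < t'

lemma exists_gap (T : Finset ℝ) : ∃ δ, Gap T δ := by
  have h1 : ∀ᶠ δ in nhdsWithin (0 : ℝ) (Set.Ioi 0), 0 < δ := self_mem_nhdsWithin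
  have h2 : ∀ᶠ δ in nhdsWithin (0 : ℝ) (Set.Ioi 0), ∀ t ∈ T, ∀ t' ∈ T, t < t' → t + δ < t' := by
    rw [Filter.eventually_all_finset]; intro t _
    rw [Filter.eventually_all_finset]; intro t' _
    by_cases h : t < t'
    · have : ∀ᶠ δ in nhds (0 : ℝ), δ < t' - t := gt_mem_nhds (by linarith)
      filter_upwards [nhdsWithin_le_nhds this] with δ hδ _
      linarith
    · exact Filter.Eventually.of_forall fun δ h' => absurd h' h
  obtain ⟨δ, h⟩ := (h1.and h2).exists
  exact ⟨δ, h⟩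

lemma step_point (t0 u : ℝ) (T : Finset ℝ) (h0 : t0 ∈ T) (δ : ℝ) (hδ : Gap T δ) :
    ∑ t ∈ T, ((if t = t0 then u else 0) - (if t + δ = t0 then u else 0)) = u := by
  have : ∀ t ∈ T, (if t + δ = t0 then u else 0) = 0 := by
    intro t ht
    rw [if_neg]
    intro h
    have := hδ.2 t ht t0 h0 (by linarith [hδ.1])
    linarith
  rw [Finset.sum_sub_distrib, Finset.sum_congr rfl this]
  simp [h0]

lemma step_interval (a b w : ℝ) (hab : a < b) (T : Finset ℝ) (ha : a ∈ T) (hb : b ∈ T) (δ : ℝ)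
    (hδ : Gap T δ) :
    ∑ t ∈ T, ((if t ∈ Set.Ioo a b then w else 0) - (if t + δ ∈ Set.Ioo a b then w else 0)) = -w := by
  have : ∀ t ∈ T, ((if t ∈ Set.Ioo a b then w else 0) - (if t + δ ∈ Set.Ioo a b then w else 0)) =
      if t = a then -w else 0 := by
    intro t ht
    have hpos := hδ.1
    rcases lt_trichotomy t a with h | h | h
    · have := hδ.2 t ht a ha h
      rw [if_neg (fun h' => by linarith [h'.1]), if_neg (fun h' => by linarith [h'.1]), if_neg h.ne]
      ring
    · subst h
      have := hδ.2 t ht b hb hab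
      rw [if_neg, if_pos, if_pos rfl]
      · ring
      · exact ⟨by linarith, this⟩
      · simp
    · rw [if_neg h.ne']
      by_cases h' : t < b
      · have := hδ.2 t ht b hb h'
        rw [if_pos ⟨h, h'⟩, if_pos ⟨by linarith, this⟩]; ring
      · rw [if_neg (fun h'' => h' h''.2), if_neg (fun h'' => h' (by linarith [h''.2]))]
        ring
  rw [Finset.sum_congr rfl this]
  simp [ha]

lemma echi_empty : echi (∅ : Set (Euc N)) = 0 := by simp [echi]

lemma coord_image {C : Set (Euc N)} (hC : RO C) (hb : Bornology.IsBounded C) (k : Fin N)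
    {u w : Euc N} (hu : u ∈ C) (hw : w ∈ C) (hne : u k ≠ w k) :
    ∃ a b : ℝ, a < b ∧ ∀ t, (C ∩ {x | x k = t}).Nonempty ↔ t ∈ Set.Ioo a b := by
  have hconv : Convex ℝ (cf k '' C) := hC.1.linear_image (cf k)
  have hord := hconv.ordConnected
  have hbd : Bornology.IsBounded (cf k '' C) := by
    have : (cf k '' C) = ((EuclideanSpace.proj k : Euc N →L[ℝ] ℝ) '' C) := rfl
    rw [this]
    exact (EuclideanSpace.proj k : Euc N →L[ℝ] ℝ).lipschitz.isBounded_image hb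
  have hbb := hbd.bddBelow
  have hba := hbd.bddAbove
  have hIne : (cf k '' C).Nonempty := ⟨_, ⟨u, hu, rfl⟩⟩
  have both : ∀ p ∈ cf k '' C, (∃ q ∈ cf k '' C, q < p) ∧ (∃ q ∈ cf k '' C, p < q) := by
    rintro p ⟨x, hx, rfl⟩
    obtain ⟨y, hy, hxy⟩ : ∃ y ∈ C, y k ≠ x k := by
      by_cases h : u k = x k
      · exact ⟨w, hw, fun h' => hne (h.trans h'.symm)⟩
      · exact ⟨u, hu, h⟩
    obtain ⟨ε, hε, h⟩ := hC.2 x hx y hy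
    have e : cf k (x + ε • (x - y)) = x k + ε * (x k - y k) := by
      simp [cf_apply]
    rcases lt_or_gt_of_ne hxy with h1 | h1
    · refine ⟨⟨_, ⟨y, hy, rfl⟩, h1⟩, ⟨_, ⟨_, h, rfl⟩, ?_⟩⟩
      rw [e, cf_apply]
      have : 0 < ε * (x k - y k) := mul_pos hε (by linarith)
      linarith
    · refine ⟨⟨_, ⟨_, h, rfl⟩, ?_⟩, ⟨_, ⟨y, hy, rfl⟩, h1⟩⟩
      rw [e, cf_apply]
      have : 0 < ε * (y k - x k) := mul_pos hε (by linarith)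
      linarith
  have hiff : ∀ t, (C ∩ {x | x k = t}).Nonempty ↔ t ∈ cf k '' C := fun t =>
    ⟨fun ⟨x, hx, hxt⟩ => ⟨x, hx, hxt⟩, fun ⟨x, hx, hxt⟩ => ⟨x, hx, hxt⟩⟩
  have hIoo : ∀ t, t ∈ cf k '' C ↔ t ∈ Set.Ioo (sInf (cf k '' C)) (sSup (cf k '' C)) := by
    intro t
    constructor
    · intro ht
      obtain ⟨⟨q, hq, hqt⟩, ⟨q', hq', hqt'⟩⟩ := both t ht
      exact ⟨(csInf_le hbb hq).trans_lt hqt, hqt'.trans_le (le_csSup hba hq')⟩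
    · rintro ⟨h1, h2⟩
      obtain ⟨q, hq, hqt⟩ := exists_lt_of_csInf_lt hIne h1
      obtain ⟨q', hq', hqt'⟩ := exists_lt_of_lt_csSup hIne h2
      exact hord.out hq hq' ⟨hqt.le, hqt'.le⟩
  refine ⟨_, _, ?_, fun t => (hiff t).trans (hIoo t)⟩
  have := (hIoo _).1 ⟨u, hu, rfl⟩
  exact this.1.trans this.2

lemma echi_integral {C : Set (Euc N)} (hC : RO C) (hb : Bornology.IsBounded C) (k : Fin N) :
    ∃ T0 : Finset ℝ, ∀ T, T0 ⊆ T → ∀ δ, Gap T δ →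
      ∑ t ∈ T, (echi (C ∩ {x | x k = t}) - echi (C ∩ {x | x k = t + δ})) = echi C := by
  by_cases hconst : ∃ t0 : ℝ, ∀ x ∈ C, x k = t0
  · obtain ⟨t0, h0⟩ := hconst
    refine ⟨{t0}, fun T hT δ hδ => ?_⟩
    have : ∀ t : ℝ, echi (C ∩ {x | x k = t}) = if t = t0 then echi C else 0 := by
      intro t
      split_ifs with h
      · congr 1
        ext x
        exact ⟨fun hx => hx.1, fun hx => ⟨hx, (h0 x hx).trans h.symm⟩⟩
      · have : C ∩ {x | x k = t} = ∅ := by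
          ext x
          simp only [Set.mem_inter_iff, Set.mem_ofPred_eq, Set.mem_empty_iff_false, iff_false]
          rintro ⟨hx, rfl⟩
          exact h (h0 x hx)
        rw [this, echi_empty]
    simp only [this]
    exact step_point t0 _ T (hT (Finset.mem_singleton_self _)) δ hδ
  · push Not at hconst
    obtain ⟨u, hu, -⟩ := hconst 0
    obtain ⟨w, hw, hne⟩ := hconst (u k)
    obtain ⟨a, b, hab, hiff⟩ := coord_image hC hb k hw hu hne
    refine ⟨{a, b}, fun T hT δ hδ => ?_⟩
    have : ∀ t : ℝ, echi (C ∩ {x | x k = t}) = if t ∈ Set.Ioo a b then - echi C else 0 := by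
      intro t
      split_ifs with h
      · exact echi_slice hC k hw hu hne ((hiff t).2 h)
      · rw [Set.not_nonempty_iff_eq_empty.1 (fun h' => h ((hiff t).1 h')), echi_empty]
    simp only [this]
    rw [step_interval a b _ hab T (hT (by simp)) (hT (by simp)) δ hδ, neg_neg]

theorem euler_aux {ι : Type*} (J : Finset ι) (c : ι → ℝ) (m : ℕ) :
    ∀ (C : ι → Set (Euc N)) (a : Fin N → ℝ), (∀ j ∈ J, RO (C j)) →
    (∀ j ∈ J, Bornology.IsBounded (C j)) →
    (∀ j ∈ J, ∀ x ∈ C j, ∀ i : Fin N, m ≤ i → x i = a i) →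
    (∀ x, ∑ j ∈ J, c j * (if x ∈ C j then 1 else 0) = 0) →
    ∑ j ∈ J, c j * echi (C j) = 0 := by
  induction m with
  | zero =>
    intro C a _ _ hpt hsum
    rw [← hsum (WithLp.toLp 2 a)]
    refine Finset.sum_congr rfl fun j hj => ?_
    congr 1
    have hsub : C j ⊆ {WithLp.toLp 2 a} := by
      intro x hx
      rw [Set.mem_singleton_iff]
      ext i
      exact hpt j hj x hx i (Nat.zero_le _)
    rcases Set.subset_singleton_iff_eq.1 hsub with h | h
    · rw [h, echi_empty]; simp
    · rw [h, echi, vectorSpan_singleton, finrank_bot]; simp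
  | succ m ih =>
    intro C a hRO hbd hpt hsum
    by_cases hm : m < N
    · let k : Fin N := ⟨m, hm⟩
      have hG : ∀ t : ℝ, ∑ j ∈ J, c j * echi (C j ∩ {x | x k = t}) = 0 := by
        intro t
        apply ih (fun j => C j ∩ {x | x k = t}) (Function.update a k t)
        · exact fun j hj => (hRO j hj).inter (RO.slice k t)
        · exact fun j hj => (hbd j hj).subset Set.inter_subset_left
        · intro j hj x hx i hi
          by_cases hik : i = k
          · subst hik; simpa using hx.2
          · rw [Function.update_of_ne hik]
            apply hpt j hj x hx.1
            have : (i : ℕ) ≠ m := fun h => hik (Fin.ext h)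
            omega
        · intro x
          by_cases hx : x k = t
          · refine (Finset.sum_congr rfl fun j _ => ?_).trans (hsum x)
            simp [hx]
          · apply Finset.sum_eq_zero
            intro j _
            simp [hx]
      have hT : ∀ j, ∃ T0 : Finset ℝ, j ∈ J → ∀ T, T0 ⊆ T → ∀ δ, Gap T δ →
          ∑ t ∈ T, (echi (C j ∩ {x | x k = t}) - echi (C j ∩ {x | x k = t + δ})) = echi (C j) := by
        intro j
        by_cases hj : j ∈ J
        · obtain ⟨T0, h⟩ := echi_integral (hRO j hj) (hbd j hj) k
          exact ⟨T0, fun _ => h⟩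
        · exact ⟨∅, fun h => absurd h hj⟩
      choose T0 hT0 using hT
      obtain ⟨δ, hδ⟩ := exists_gap (J.biUnion T0)
      have : ∀ j ∈ J, c j * echi (C j) = ∑ t ∈ J.biUnion T0,
          (c j * echi (C j ∩ {x | x k = t}) - c j * echi (C j ∩ {x | x k = t + δ})) := by
        intro j hj
        rw [← hT0 j hj _ (Finset.subset_biUnion_of_mem T0 hj) δ hδ, Finset.mul_sum]
        simp only [mul_sub]
      rw [Finset.sum_congr rfl this, Finset.sum_comm]
      apply Finset.sum_eq_zero
      intro t _
      rw [Finset.sum_sub_distrib, hG, hG, sub_zero]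
    · apply ih C a hRO hbd _ hsum
      intro j hj x hx i hi
      exact absurd i.2 (by omega)

theorem euler_rel {ι : Type*} (J : Finset ι) (C : ι → Set (Euc N)) (D : Set (Euc N))
    (hRO : ∀ j ∈ J, RO (C j)) (hbd : ∀ j ∈ J, Bornology.IsBounded (C j)) (hD : RO D)
    (hDb : Bornology.IsBounded D) (hsub : ∀ j ∈ J, C j ⊆ D)
    (hun : ∀ x ∈ D, ∃! j, j ∈ J ∧ x ∈ C j) :
    ∑ j ∈ J, echi (C j) = echi D := by
  have := euler_aux (insert none (J.image some)) (fun o : Option ι => if o = none then (-1 : ℝ) else 1)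
    N (fun o => o.elim D C) 0 ?_ ?_ ?_ ?_
  · rw [Finset.sum_insert (by simp), Finset.sum_image (by simp)] at this
    simp at this
    linarith
  · intro o ho
    rcases o with _ | j
    · exact hD
    · exact hRO j (by simpa using ho)
  · intro o ho
    rcases o with _ | j
    · exact hDb
    · exact hbd j (by simpa using ho)
  · intro _ _ x _ i hi
    exact absurd i.2 (by omega)
  · intro x
    have hnone : ∀ o : Option ι, ∀ E : Set (Euc N), o.elim D C = E →
        (if x ∈ o.elim D C then (1 : ℝ) else 0) = if x ∈ E then 1 else 0 := by
      rintro o E rfl; rfl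
    rw [Finset.sum_insert (by simp), Finset.sum_image (by simp), hnone none D rfl,
      Finset.sum_congr rfl fun i _ => by rw [hnone (some i) (C i) rfl]]
    simp only [if_true, reduceCtorEq, if_false, one_mul]
    by_cases hx : x ∈ D
    · obtain ⟨j, ⟨hj, hxj⟩, huniq⟩ := hun x hx
      rw [Finset.sum_eq_single j]
      · simp [hx, hxj]
      · intro i hi hij
        exact if_neg fun h => hij (huniq i ⟨hi, h⟩)
      · exact fun h => absurd hj h
    · rw [if_neg hx, Finset.sum_eq_zero]
      · simp
      · intro j hj
        exact if_neg fun h => hx (hsub j hj h)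

lemma open_eventually {s : Finset (Euc N)} (hs : Good s) {x : Euc N} (hx : x ∈ openSimplex s) :
    ∀ᶠ z in nhds x, z ∈ affineSpan ℝ (s : Set (Euc N)) → z ∈ openSimplex s := by
  have hx' := (mem_openSimplex_iff_lam hs).1 hx
  have : ∀ᶠ z in nhds x, ∀ v ∈ s, 0 < lam s v z := by
    rw [Filter.eventually_all_finset]
    intro v hv
    exact (lam_cont v).continuousAt.eventually (lt_mem_nhds (hx'.2 v hv))
  filter_upwards [this] with z hz hz'
  exact (mem_openSimplex_iff_lam hs).2 ⟨hz', hz⟩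

lemma tendsto_line (x v : Euc N) :
    Tendsto (fun t : ℝ => x + t • v) (nhdsWithin 0 (Set.Ioi 0)) (nhds x) := by
  have : Continuous (fun t : ℝ => x + t • v) := by fun_prop
  have h := this.tendsto 0
  simp only [zero_smul, add_zero] at h
  exact h.mono_left nhdsWithin_le_nhds

lemma pos_eventually : ∀ᶠ δ in nhdsWithin (0 : ℝ) (Set.Ioi 0), 0 < δ := self_mem_nhdsWithin

lemma RO_open {s : Finset (Euc N)} (hs : Good s) : RO (openSimplex s) := by
  constructor
  · have : openSimplex s = (affineSpan ℝ (s : Set (Euc N)) : Set (Euc N)) ∩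
        ⋂ v ∈ s, (lam s v) ⁻¹' Set.Ioi 0 := by
      ext x
      rw [mem_openSimplex_iff_lam hs]
      simp
    rw [this]
    refine (AffineSubspace.convex _).inter (convex_iInter₂ fun v _ => ?_)
    exact (convex_Ioi 0).affine_preimage (lam s v)
  · intro x hx y hy
    obtain ⟨ε, h1, h2⟩ := (pos_eventually.and ((tendsto_line x (x - y)).eventually
      (open_eventually hs hx))).exists
    refine ⟨ε, h1, h2 ?_⟩
    have hx' := ((mem_openSimplex_iff_lam hs).1 hx).1
    have hy' := ((mem_openSimplex_iff_lam hs).1 hy).1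
    have := AffineMap.lineMap_mem (-ε) hx' hy'
    rw [AffineMap.lineMap_apply] at this
    convert this using 1
    simp only [vsub_eq_sub, vadd_eq_add]
    module

lemma RO_ball (x : Euc N) (ε : ℝ) : RO (Metric.ball x ε) := by
  refine ⟨convex_ball x ε, fun u hu v hv => ?_⟩
  obtain ⟨δ, h1, h2⟩ := (pos_eventually.and ((tendsto_line u (u - v)).eventually
      (Metric.isOpen_ball.mem_nhds hu))).exists
  exact ⟨δ, h1, h2⟩

lemma finrank_simplex {s : Finset (Euc N)} (hs : Good s) :
    Module.finrank ℝ (vectorSpan ℝ (s : Set (Euc N))) + 1 = s.card := by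
  have h := hs.2.finrank_vectorSpan (n := s.card - 1) (by
    have := Finset.card_pos.2 hs.1
    simp; omega)
  have h2 : Set.range ((↑) : s → Euc N) = (s : Set (Euc N)) := Subtype.range_coe
  rw [h2] at h
  rw [h]
  have := Finset.card_pos.2 hs.1
  omega

lemma echi_simplex {s : Finset (Euc N)} (hs : Good s) {x : Euc N}
    (hx : x ∈ convexHull ℝ (s : Set (Euc N))) {ε : ℝ} (hε : 0 < ε) :
    echi (openSimplex s ∩ Metric.ball x ε) = (-1 : ℝ) ^ (s.card + 1) := by
  have hball : ∀ᶠ z in nhds x, z ∈ Metric.ball x ε := Metric.ball_mem_nhds x hε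
  obtain ⟨z, hz⟩ : (openSimplex s ∩ Metric.ball x ε).Nonempty := by
    have hle : ∀ᶠ δ in nhdsWithin (0 : ℝ) (Set.Ioi 0), δ < 1 :=
      nhdsWithin_le_nhds (gt_mem_nhds one_pos)
    obtain ⟨δ, ⟨h1, h2⟩, h3⟩ := ((pos_eventually.and hle).and
      ((tendsto_line x (s.centroid ℝ id - x)).eventually hball)).exists
    have := lineMap_mem_open hs hx (centroid_mem hs) h1 h2.le
    rw [AffineMap.lineMap_apply, vadd_eq_add, vsub_eq_sub, add_comm] at this
    exact ⟨_, this, h3⟩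
  have hzs := ((mem_openSimplex_iff_lam hs).1 hz.1).1
  have hspan : vectorSpan ℝ (openSimplex s ∩ Metric.ball x ε) = vectorSpan ℝ (s : Set (Euc N)) := by
    apply le_antisymm
    · rw [← direction_affineSpan ℝ (s : Set (Euc N)), AffineSubspace.direction_eq_vectorSpan]
      apply vectorSpan_mono
      exact fun y hy => ((mem_openSimplex_iff_lam hs).1 hy.1).1
    · intro v hv
      obtain ⟨δ, ⟨h1, h2⟩, h3⟩ := ((pos_eventually.and ((tendsto_line z v).eventually
        (open_eventually hs hz.1))).and ((tendsto_line z v).eventually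
        (Metric.isOpen_ball.mem_nhds hz.2))).exists
      have h4 : z + δ • v ∈ affineSpan ℝ (s : Set (Euc N)) := by
        rw [add_comm]
        refine AffineSubspace.vadd_mem_of_mem_direction ?_ hzs
        rw [direction_affineSpan]
        exact Submodule.smul_mem _ _ hv
      have h5 := vsub_mem_vectorSpan ℝ (show z + δ • v ∈ openSimplex s ∩ Metric.ball x ε from
        ⟨h2 h4, h3⟩) hz
      simp only [vsub_eq_sub, add_sub_cancel_left] at h5
      have := Submodule.smul_mem _ δ⁻¹ h5
      rwa [smul_smul, inv_mul_cancel₀ h1.ne', one_smul] at this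
  rw [echi, if_pos ⟨z, hz⟩, hspan, ← finrank_simplex hs, pow_succ, pow_succ]
  ring

lemma face_good {K : SimplicialComplex ℝ (Euc N)} {s : Finset (Euc N)} (hs : s ∈ K.faces) :
    Good s := ⟨SimplicialComplex.nonempty_of_mem_faces hs, K.indep hs⟩

lemma Good.mono {s t : Finset (Euc N)} (hs : Good s) (ht : t.Nonempty) (h : t ⊆ s) : Good t :=
  ⟨ht, hs.2.mono (by exact_mod_cast h)⟩

lemma subset_of_open {K : SimplicialComplex ℝ (Euc N)} {s t : Finset (Euc N)} (hs : s ∈ K.faces)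
    (ht : t ∈ K.faces) {x : Euc N} (hxs : x ∈ openSimplex s)
    (hxt : x ∈ convexHull ℝ (t : Set (Euc N))) : s ⊆ t := by
  have hx := K.inter_subset_convexHull hs ht ⟨openSimplex_subset hxs, hxt⟩
  intro v hv
  by_contra hvt
  have h1 := ((mem_openSimplex_iff_lam (face_good hs)).1 hxs).2 v hv
  have hc : Convex ℝ (lam s v ⁻¹' {0}) := (convex_singleton 0).affine_preimage (lam s v)
  have : x ∈ lam s v ⁻¹' {0} := by
    refine convexHull_min ?_ hc hx
    rintro u ⟨hu, hut⟩
    have := (bary_spec (face_good hs)).2.2.2.1 v hv u hu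
    rw [if_neg] at this
    · exact this
    · rintro rfl; exact hvt hut
  have h2 : lam s v x = 0 := this
  linarith

lemma open_unique {K : SimplicialComplex ℝ (Euc N)} {s t : Finset (Euc N)} (hs : s ∈ K.faces)
    (ht : t ∈ K.faces) {x : Euc N} (hxs : x ∈ openSimplex s) (hxt : x ∈ openSimplex t) : s = t :=
  (subset_of_open hs ht hxs (openSimplex_subset hxt)).antisymm
    (subset_of_open ht hs hxt (openSimplex_subset hxs))

lemma exists_open {s : Finset (Euc N)} (hs : Good s) {x : Euc N}
    (hx : x ∈ convexHull ℝ (s : Set (Euc N))) : ∃ t ⊆ s, t.Nonempty ∧ x ∈ openSimplex t := by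
  rw [mem_convexHull_iff_lam hs] at hx
  obtain ⟨hx1, hx2⟩ := hx
  obtain ⟨h1, h2⟩ := lam_sum_span hs hx1
  set t := s.filter (fun v => 0 < lam s v x) with ht
  have hts : t ⊆ s := Finset.filter_subset _ _
  have hz : ∀ v ∈ s, v ∉ t → lam s v x = 0 := by
    intro v hv hvt
    have h3 := hx2 v hv
    have : ¬ 0 < lam s v x := fun h => hvt (Finset.mem_filter.2 ⟨hv, h⟩)
    linarith
  have h1' : ∑ v ∈ t, lam s v x = 1 := by
    rw [← h1]; exact Finset.sum_subset hts hz
  have h2' : ∑ v ∈ t, lam s v x • v = x := by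
    refine (Finset.sum_subset hts fun v hv hvt => ?_).trans h2
    rw [hz v hv hvt, zero_smul]
  have htne : t.Nonempty := by
    rw [Finset.nonempty_iff_ne_empty]
    intro h
    rw [h] at h1'
    simp at h1'
  have htg : Good t := hs.mono htne hts
  refine ⟨t, hts, htne, ?_⟩
  have hcomb : x = t.affineCombination ℝ (id : Euc N → Euc N) (fun u => lam s u x) := by
    rw [Finset.affineCombination_eq_linear_combination _ _ _ h1']
    exact h2'.symm
  have hxc : x ∈ convexHull ℝ (t : Set (Euc N)) := by
    rw [← h2']
    exact (convex_convexHull ℝ _).sum_mem (fun v hv => hx2 v (hts hv)) h1'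
      (fun v hv => subset_convexHull ℝ _ hv)
  rw [mem_openSimplex_iff_lam htg]
  refine ⟨convexHull_subset_affineSpan _ hxc, fun v hv => ?_⟩
  have : lam t v x = lam s v x := by
    conv_lhs => rw [hcomb]
    rw [Finset.map_affineCombination _ _ _ h1',
      Finset.affineCombination_eq_linear_combination _ _ _ h1']
    rw [Finset.sum_eq_single v]
    · have := (bary_spec htg).2.2.2.1 v hv v hv
      simp [this]
    · intro u hu huv
      have := (bary_spec htg).2.2.2.1 v hv u hu
      rw [if_neg huv] at this
      simp [this]
    · exact fun h => absurd hv h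
  rw [this]
  exact (Finset.mem_filter.1 hv).2

lemma exists_open_face {K : SimplicialComplex ℝ (Euc N)} {x : Euc N} (hx : x ∈ K.space) :
    ∃ t ∈ K.faces, x ∈ openSimplex t := by
  obtain ⟨s, hs, hxs⟩ := SimplicialComplex.mem_space_iff.1 hx
  obtain ⟨t, hts, htne, hxt⟩ := exists_open (face_good hs) hxs
  exact ⟨t, K.down_closed hs hts htne, hxt⟩

lemma hull_eventually {K : SimplicialComplex ℝ (Euc N)} (hfin : K.faces.Finite) (x : Euc N) :
    ∀ᶠ z in nhds x, ∀ η ∈ K.faces, z ∈ convexHull ℝ (η : Set (Euc N)) →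
      x ∈ convexHull ℝ (η : Set (Euc N)) := by
  rw [hfin.eventually_all]
  intro η _
  by_cases hx : x ∈ convexHull ℝ (η : Set (Euc N))
  · exact Filter.Eventually.of_forall fun _ _ => hx
  · have hcl : IsClosed (convexHull ℝ (η : Set (Euc N))) := η.finite_toSet.isClosed_convexHull ℝ
    filter_upwards [hcl.isOpen_compl.mem_nhds hx] with z hz hz'
    exact absurd hz' hz

lemma local_cover {K L : SimplicialComplex ℝ (Euc N)} (hLfin : L.faces.Finite)
    (hsub : IsSubdivision K L) {τ ρ : Finset (Euc N)} (hτ : τ ∈ L.faces) (hρ : ρ ∈ K.faces)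
    {x : Euc N} (hx : x ∈ openSimplex τ) :
    ∀ᶠ z in nhds x, z ∈ openSimplex ρ →
      ∃! η, η ∈ hLfin.toFinset.filter (fun η => τ ⊆ η ∧ openSimplex η ⊆ openSimplex ρ) ∧
        z ∈ openSimplex η := by
  filter_upwards [hull_eventually hLfin x] with z hz hzρ
  have hzL : z ∈ L.space := by
    rw [hsub.1]
    exact SimplicialComplex.convexHull_subset_space hρ (openSimplex_subset hzρ)
  obtain ⟨η, hη, hzη⟩ := exists_open_face hzL
  obtain ⟨ρ', hρ', hηρ⟩ := hsub.2 η hη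
  have : ρ' = ρ := open_unique hρ' hρ (hηρ hzη) hzρ
  subst this
  refine ⟨η, ⟨?_, hzη⟩, ?_⟩
  · rw [Finset.mem_filter, Set.Finite.mem_toFinset]
    exact ⟨hη, subset_of_open hτ hη hx (hz η hη (openSimplex_subset hzη)), hηρ⟩
  · rintro η' ⟨hη', hzη'⟩
    rw [Finset.mem_filter, Set.Finite.mem_toFinset] at hη'
    exact open_unique hη'.1 hη hzη' hzη

lemma local_euler {K L : SimplicialComplex ℝ (Euc N)} (hLfin : L.faces.Finite)
    (hsub : IsSubdivision K L) {τ ρ : Finset (Euc N)} (hτ : τ ∈ L.faces) (hρ : ρ ∈ K.faces)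
    {x : Euc N} (hx : x ∈ openSimplex τ) (hxρ : x ∈ convexHull ℝ (ρ : Set (Euc N))) :
    ∑ η ∈ hLfin.toFinset.filter (fun η => τ ⊆ η ∧ openSimplex η ⊆ openSimplex ρ),
      (-1 : ℝ) ^ (η.card + 1) = (-1 : ℝ) ^ (ρ.card + 1) := by
  obtain ⟨ε, hε, h⟩ := Metric.eventually_nhds_iff_ball.1 (local_cover hLfin hsub hτ hρ hx)
  rw [← echi_simplex (face_good hρ) hxρ hε, ← euler_rel
    (hLfin.toFinset.filter (fun η => τ ⊆ η ∧ openSimplex η ⊆ openSimplex ρ))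
    (fun η => openSimplex η ∩ Metric.ball x ε) (openSimplex ρ ∩ Metric.ball x ε)]
  · refine Finset.sum_congr rfl fun η hη => ?_
    rw [Finset.mem_filter, Set.Finite.mem_toFinset] at hη
    rw [echi_simplex (face_good hη.1) (convexHull_mono (by exact_mod_cast hη.2.1)
      (openSimplex_subset hx)) hε]
  · intro η hη
    rw [Finset.mem_filter, Set.Finite.mem_toFinset] at hη
    exact (RO_open (face_good hη.1)).inter (RO_ball x ε)
  · intro η hη
    exact Metric.isBounded_ball.subset Set.inter_subset_right
  · exact (RO_open (face_good hρ)).inter (RO_ball x ε)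
  · exact Metric.isBounded_ball.subset Set.inter_subset_right
  · intro η hη
    rw [Finset.mem_filter] at hη
    exact Set.inter_subset_inter_left _ hη.2.2
  · rintro z ⟨hz, hzb⟩
    obtain ⟨η, ⟨hη, hzη⟩, hu⟩ := h z hzb hz
    exact ⟨η, ⟨hη, hzη, hzb⟩, fun η' h' => hu η' ⟨h'.1, h'.2.1⟩⟩

lemma carrier_iff {K L : SimplicialComplex ℝ (Euc N)} {τ ζ η ρ : Finset (Euc N)}
    (hζ : ζ ∈ K.faces) (hη : η ∈ L.faces) (hρ : ρ ∈ K.faces)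
    {x : Euc N} (hx : x ∈ openSimplex τ) (hxζ : x ∈ openSimplex ζ) (hτη : τ ⊆ η)
    (hηρ : openSimplex η ⊆ openSimplex ρ) : ζ ⊆ ρ := by
  apply subset_of_open hζ hρ hxζ
  apply convexHull_subset_of_open (face_good hη) (hηρ.trans openSimplex_subset)
  exact convexHull_mono (by exact_mod_cast hτη) (openSimplex_subset hx)

lemma span_le_of_open {η ρ : Finset (Euc N)} (hη : Good η)
    (hηρ : openSimplex η ⊆ openSimplex ρ) :
    affineSpan ℝ (η : Set (Euc N)) ≤ affineSpan ℝ (ρ : Set (Euc N)) := by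
  rw [affineSpan_le]
  exact (subset_convexHull ℝ _).trans ((convexHull_subset_of_open hη
    (hηρ.trans openSimplex_subset)).trans (convexHull_subset_affineSpan _))

lemma card_le_of_open {η ρ : Finset (Euc N)} (hη : Good η) (hρ : Good ρ)
    (hηρ : openSimplex η ⊆ openSimplex ρ) : η.card ≤ ρ.card := by
  rw [← finrank_simplex hη, ← finrank_simplex hρ, ← direction_affineSpan, ← direction_affineSpan]
  exact Nat.succ_le_succ (Submodule.finrank_mono
    (AffineSubspace.direction_le (span_le_of_open hη hηρ)))

lemma span_eq_of_card {η ρ : Finset (Euc N)} (hη : Good η) (hρ : Good ρ)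
    (hηρ : openSimplex η ⊆ openSimplex ρ) (hc : η.card = ρ.card) :
    affineSpan ℝ (η : Set (Euc N)) = affineSpan ℝ (ρ : Set (Euc N)) := by
  have hle := span_le_of_open hη hηρ
  refine AffineSubspace.eq_of_direction_eq_of_nonempty_of_le ?_ ?_ hle
  · apply Submodule.eq_of_le_of_finrank_eq (AffineSubspace.direction_le hle)
    rw [direction_affineSpan, direction_affineSpan]
    have h1 := finrank_simplex hη
    have h2 := finrank_simplex hρ
    omega
  · exact (affineSpan_nonempty ℝ).2 (by exact_mod_cast hη.1)

lemma null_comap {M : ℕ} (f : Euc N →ᵃ[ℝ] Euc M) (A : AffineSubspace ℝ (Euc M)) {z : Euc N}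
    (hz : f z ∉ A) : volume (f ⁻¹' (A : Set (Euc M))) = 0 := by
  have := Measure.addHaar_affineSubspace (volume : Measure (Euc N)) (A.comap f) (by
    intro h
    have : z ∈ A.comap f := by rw [h]; trivial
    exact hz this)
  exact this

lemma null_lam {σ : Finset (Euc N)} (hσ : Good σ) {v : Euc N} (hv : v ∈ σ) :
    volume {y : Euc N | lam σ v y = 0} = 0 := by
  have h0 : lam σ v v = 1 := by simpa using (bary_spec hσ).2.2.2.1 v hv v hv
  have := Measure.addHaar_affineSubspace (volume : Measure (Euc N))
    ((AffineSubspace.mk' (0 : ℝ) (⊥ : Submodule ℝ ℝ)).comap (lam σ v)) (by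
      intro h
      have : v ∈ ((AffineSubspace.mk' (0 : ℝ) (⊥ : Submodule ℝ ℝ)).comap (lam σ v)) := by
        rw [h]; trivial
      rw [AffineSubspace.mem_comap, AffineSubspace.mem_mk', h0] at this
      simp at this)
  convert this using 2
  ext y
  simp [AffineSubspace.mem_comap, AffineSubspace.mem_mk']

lemma ae_closed_open {σ : Finset (Euc N)} (hσ : Good σ) :
    {y : Euc N | ∀ v ∈ σ, 0 ≤ lam σ v y} =ᵐ[volume] {y | ∀ v ∈ σ, 0 < lam σ v y} := by
  have : ∀ᵐ y : Euc N, ∀ v ∈ σ, lam σ v y ≠ 0 := by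
    rw [Filter.eventually_all_finset]
    intro v hv
    rw [ae_iff]
    simpa using null_lam hσ hv
  filter_upwards [this] with y hy
  apply propext
  change (∀ v ∈ σ, 0 ≤ lam σ v y) ↔ (∀ v ∈ σ, 0 < lam σ v y)
  exact ⟨fun h v hv => lt_of_le_of_ne (h v hv) (hy v hv).symm, fun h v hv => (h v hv).le⟩

lemma measurable_open {s : Finset (Euc N)} (hs : Good s) : MeasurableSet (openSimplex s) := by
  have : openSimplex s = (affineSpan ℝ (s : Set (Euc N)) : Set (Euc N)) ∩
      ⋂ v ∈ s, (lam s v) ⁻¹' Set.Ioi 0 := by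
    ext x
    rw [mem_openSimplex_iff_lam hs]
    simp
  rw [this]
  refine (AffineSubspace.closed_of_finiteDimensional _).measurableSet.inter ?_
  refine Finset.measurableSet_biInter _ fun v _ => ?_
  exact (isOpen_Ioi.preimage (lam_cont v)).measurableSet

lemma pre_open {σ ρ : Finset (Euc N)} (hσ : Good σ) (hρ : Good ρ)
    (hspan : affineSpan ℝ (σ : Set (Euc N)) = affineSpan ℝ (ρ : Set (Euc N))) :
    prj ρ ⁻¹' openSimplex σ = {y | ∀ v ∈ σ, 0 < lam σ v y} := by
  ext y
  rw [Set.mem_preimage, mem_openSimplex_iff_lam hσ, hspan]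
  have hv : vectorSpan ℝ (σ : Set (Euc N)) = vectorSpan ℝ (ρ : Set (Euc N)) := by
    rw [← direction_affineSpan, hspan, direction_affineSpan]
  have : ∀ v, lam σ v (prj ρ y) = lam σ v y := by
    intro v
    have h := lam_linear_prj hσ v (y - prj ρ y) (by rw [hv]; exact (bary_spec hρ).1 y) (prj ρ y)
    rw [← h]
    congr 1
    abel
  simp only [this, (bary_spec hρ).2.1 y, true_and]
  rfl

lemma pre_null {η ρ : Finset (Euc N)} (hη : Good η) (hρ : Good ρ) (hc : η.card < ρ.card) :
    volume (prj ρ ⁻¹' openSimplex η) = 0 := by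
  obtain ⟨z, hz, hzη⟩ : ∃ z ∈ ρ, z ∉ affineSpan ℝ (η : Set (Euc N)) := by
    by_contra! h
    have hle : affineSpan ℝ (ρ : Set (Euc N)) ≤ affineSpan ℝ (η : Set (Euc N)) :=
      affineSpan_le.2 h
    have := Submodule.finrank_mono (AffineSubspace.direction_le hle)
    rw [direction_affineSpan, direction_affineSpan] at this
    have h1 := finrank_simplex hη
    have h2 := finrank_simplex hρ
    omega
  refine measure_mono_null ?_ (null_comap (prj ρ) (affineSpan ℝ (η : Set (Euc N))) (z := z) ?_)
  · exact Set.preimage_mono fun y hy => ((mem_openSimplex_iff_lam hη).1 hy).1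
  · rwa [(bary_spec hρ).2.2.1 z (subset_affineSpan ℝ _ hz)]

lemma angle_add {K L : SimplicialComplex ℝ (Euc N)} (hLfin : L.faces.Finite)
    (hsub : IsSubdivision K L) {τ ζ ρ : Finset (Euc N)} (hτ : τ ∈ L.faces) (hζ : ζ ∈ K.faces)
    (hρ : ρ ∈ K.faces) (hcont : openSimplex τ ⊆ openSimplex ζ) (hζρ : ζ ⊆ ρ) :
    solidAngle ζ ρ = ∑ σ ∈ (hLfin.toFinset.filter
      (fun η => τ ⊆ η ∧ openSimplex η ⊆ openSimplex ρ)).filter (fun σ => σ.card = ρ.card),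
        solidAngle τ σ := by
  set J := hLfin.toFinset.filter (fun η => τ ⊆ η ∧ openSimplex η ⊆ openSimplex ρ) with hJ
  have hJm : ∀ η ∈ J, η ∈ L.faces ∧ τ ⊆ η ∧ openSimplex η ⊆ openSimplex ρ := by
    intro η hη
    rwa [hJ, Finset.mem_filter, Set.Finite.mem_toFinset] at hη
  have hgτ := face_good hτ
  have hgζ := face_good hζ
  have hgρ := face_good hρ
  set x := τ.centroid ℝ id with hxdef
  have hx : x ∈ openSimplex τ := centroid_mem hgτ
  have hxζ := hcont hx
  have hprjx : prj ρ x = x := (bary_spec hgρ).2.2.1 x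
    (affineSpan_mono ℝ (by exact_mod_cast hζρ) ((mem_openSimplex_iff_lam hgζ).1 hxζ).1)
  have hcover : ∀ᶠ y in nhds x, prj ρ y ∈ openSimplex ρ →
      ∃! η, η ∈ J ∧ prj ρ y ∈ openSimplex η := by
    have h := local_cover hLfin hsub hτ hρ hx
    have h2 : Tendsto (prj ρ) (nhds x) (nhds x) := by
      have := (prj_cont (s := ρ)).tendsto x
      rwa [hprjx] at this
    exact h2.eventually h
  obtain ⟨ε0, hε0, hb⟩ := Metric.eventually_nhds_iff_ball.1 hcover
  have hsmall : ∀ᶠ ε in nhdsWithin (0 : ℝ) (Set.Ioi 0), ε < ε0 :=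
    nhdsWithin_le_nhds (gt_mem_nhds hε0)
  have hall : ∀ᶠ ε in nhdsWithin (0 : ℝ) (Set.Ioi 0), ∀ σ ∈ J.filter (fun σ => σ.card = ρ.card),
      (volume (Metric.ball x ε ∩ {y | ∀ v ∈ σ, 0 ≤ lam σ v y})).toReal /
        (volume (Metric.ball x ε)).toReal = solidAngle τ σ := by
    rw [Filter.eventually_all_finset]
    intro σ hσ
    have h := hJm σ (Finset.mem_filter.1 hσ).1
    rw [solidAngle_eq (face_good h.1) hgτ h.2.1]
    exact ratio_eventually (face_good h.1) hgτ h.2.1 hx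
  obtain ⟨ε, ⟨h1, h2⟩, h3⟩ := ((hsmall.and hall).and (ratio_eventually hgρ hgζ hζρ hxζ)).exists
  rw [solidAngle_eq hgρ hgζ hζρ, ← h3, ← Finset.sum_congr rfl h2, ← Finset.sum_div]
  congr 1
  have hρpre := pre_open hgρ hgρ rfl
  have e1 : volume (Metric.ball x ε ∩ {y | ∀ v ∈ ρ, 0 ≤ lam ρ v y}) =
      volume (Metric.ball x ε ∩ prj ρ ⁻¹' openSimplex ρ) := by
    rw [hρpre]
    exact measure_congr (ae_eq_set_inter (ae_eq_refl _) (ae_closed_open hgρ))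
  have e2 : Metric.ball x ε ∩ prj ρ ⁻¹' openSimplex ρ =
      ⋃ η ∈ J, (Metric.ball x ε ∩ prj ρ ⁻¹' openSimplex η) := by
    ext y
    simp only [Set.mem_inter_iff, Set.mem_iUnion, Set.mem_preimage]
    constructor
    · rintro ⟨hy, hyρ⟩
      obtain ⟨η, ⟨hη, hyη⟩, -⟩ := hb y (Metric.ball_subset_ball h1.le hy) hyρ
      exact ⟨η, hη, hy, hyη⟩
    · rintro ⟨η, hη, hy, hyη⟩
      exact ⟨hy, (hJm η hη).2.2 hyη⟩
  rw [e1, e2, measure_biUnion_finset]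
  · rw [ENNReal.toReal_sum]
    · rw [← Finset.sum_subset (Finset.filter_subset (fun σ => σ.card = ρ.card) J)]
      · refine Finset.sum_congr rfl fun σ hσ => ?_
        obtain ⟨hσJ, hσc⟩ := Finset.mem_filter.1 hσ
        have h := hJm σ hσJ
        have hgσ := face_good h.1
        rw [pre_open hgσ hgρ (span_eq_of_card hgσ hgρ h.2.2 hσc)]
        congr 1
        exact measure_congr (ae_eq_set_inter (ae_eq_refl _) (ae_closed_open hgσ).symm)
      · intro η hη hne
        have h := hJm η hη
        have hgη := face_good h.1
        have hlt : η.card < ρ.card := lt_of_le_of_ne (card_le_of_open hgη hgρ h.2.2)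
          fun hc => hne (Finset.mem_filter.2 ⟨hη, hc⟩)
        rw [measure_mono_null Set.inter_subset_right (pre_null hgη hgρ hlt)]
        simp
    · intro η _
      exact ((measure_mono Set.inter_subset_left).trans_lt measure_ball_lt_top).ne
  · intro η hη η' hη' hne
    rw [Function.onFun, Set.disjoint_left]
    rintro y ⟨hy, hyη⟩ ⟨-, hyη'⟩
    exact hne (open_unique (hJm η hη).1 (hJm η' hη').1 hyη hyη')
  · intro η hη
    exact measurableSet_ball.inter
      ((measurable_open (face_good (hJm η hη).1)).preimage prj_cont.measurable)

lemma zero_mem_Tcone (r : ℕ) : (0 : ℝ × ℝ) ∈ Tcone r := Or.inl rfl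

lemma mem_Tcone {r : ℕ} {p : ℝ × ℝ} : p ∈ Tcone r ↔
    p = 0 ∨ ∃ k < r, ∃ t : ℝ, 0 ≤ t ∧ t < 1 ∧ p = t • ((1 : ℝ), (k : ℝ)) := by
  simp [Tcone]

lemma smul_mem_Tcone {r : ℕ} {p : ℝ × ℝ} (hp : p ∈ Tcone r) {δ : ℝ} (h0 : 0 < δ) (h1 : δ ≤ 1) :
    δ • p ∈ Tcone r := by
  rw [mem_Tcone] at hp ⊢
  rcases hp with rfl | ⟨k, hk, t, ht0, ht1, rfl⟩
  · left; simp
  · right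
    refine ⟨k, hk, δ * t, by positivity, ?_, by rw [smul_smul]⟩
    nlinarith

lemma norm_Tcone {r : ℕ} {p : ℝ × ℝ} (hp : p ∈ Tcone r) : ‖p‖ ≤ r + 1 := by
  rw [mem_Tcone] at hp
  rcases hp with rfl | ⟨k, hk, t, ht0, ht1, rfl⟩
  · simp; positivity
  · have hk' : (k : ℝ) < r := by exact_mod_cast hk
    have hk0 : (0 : ℝ) ≤ k := by positivity
    rw [norm_smul, Prod.norm_def]
    simp only [norm_one, Real.norm_eq_abs, abs_of_nonneg ht0, Nat.abs_cast]
    have : max 1 (k : ℝ) ≤ r + 1 := max_le (by linarith) (by linarith)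
    have h0 : (0 : ℝ) ≤ max 1 (k : ℝ) := le_max_of_le_left zero_le_one
    nlinarith

lemma shrink_one (r : ℕ) {δ : ℝ} (h0 : 0 < δ) (h1 : δ ≤ 1) :
    Topology.IsOpenEmbedding
      (fun p : Tcone r => (⟨δ • (p : ℝ × ℝ), smul_mem_Tcone p.2 h0 h1⟩ : Tcone r)) := by
  refine ⟨?_, ?_⟩
  · have h : Topology.IsEmbedding (fun p : Tcone r => δ • (p : ℝ × ℝ)) :=
      (Homeomorph.smulOfNeZero δ h0.ne').isEmbedding.comp Topology.IsEmbedding.subtypeVal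
    exact h.codRestrict (Tcone r) _
  · have : Set.range (fun p : Tcone r =>
        (⟨δ • (p : ℝ × ℝ), smul_mem_Tcone p.2 h0 h1⟩ : Tcone r)) =
        {p : Tcone r | (p : ℝ × ℝ).1 < δ} := by
      ext ⟨p, hp⟩
      simp only [Set.mem_range, Subtype.mk.injEq, Set.mem_ofPred_eq, Subtype.exists]
      constructor
      · rintro ⟨q, hq, rfl⟩
        rw [mem_Tcone] at hq
        rcases hq with rfl | ⟨k, hk, t, ht0, ht1, rfl⟩
        · simpa using h0
        · simp; nlinarith
      · intro hlt
        refine ⟨δ⁻¹ • p, ?_, by rw [smul_smul, mul_inv_cancel₀ h0.ne', one_smul]⟩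
        rw [mem_Tcone] at hp ⊢
        rcases hp with rfl | ⟨k, hk, t, ht0, ht1, rfl⟩
        · left; simp
        · right
          have hlt' : t < δ := by simpa using hlt
          refine ⟨k, hk, δ⁻¹ * t, by positivity, ?_, by rw [smul_smul]⟩
          rw [inv_mul_lt_iff₀ h0]; linarith
    rw [this]
    exact isOpen_lt (by fun_prop) continuous_const

lemma shrink (r m : ℕ) (v0 : EuclideanSpace ℝ (Fin m))
    (O : Set (Tcone r × EuclideanSpace ℝ (Fin m)))
    (hO : O ∈ nhds ((⟨0, zero_mem_Tcone r⟩ : Tcone r), v0)) :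
    ∃ g : Tcone r × EuclideanSpace ℝ (Fin m) → Tcone r × EuclideanSpace ℝ (Fin m),
      Topology.IsOpenEmbedding g ∧
      g (⟨0, zero_mem_Tcone r⟩, 0) = (⟨0, zero_mem_Tcone r⟩, v0) ∧ ∀ q, g q ∈ O := by
  obtain ⟨u, hu, v, hv, huv⟩ := mem_nhds_prod_iff.1 hO
  obtain ⟨a, ha, hau⟩ := Metric.mem_nhds_iff.1 hu
  obtain ⟨b, hb, hbv⟩ := Metric.mem_nhds_iff.1 hv
  have hr : (0 : ℝ) < r + 1 := by positivity
  set δ := min 1 (a / (2 * (r + 1))) with hδ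
  have h0 : 0 < δ := lt_min one_pos (by positivity)
  have h1 : δ ≤ 1 := min_le_left _ _
  refine ⟨Prod.map (fun p : Tcone r => (⟨δ • (p : ℝ × ℝ), smul_mem_Tcone p.2 h0 h1⟩ : Tcone r))
    (OpenPartialHomeomorph.univBall v0 b), ?_, ?_, ?_⟩
  · exact (shrink_one r h0 h1).prodMap
      ((OpenPartialHomeomorph.univBall v0 b).isOpenEmbedding
        (OpenPartialHomeomorph.univBall_source v0 b))
  · simp
  · rintro ⟨p, w⟩
    apply huv
    refine ⟨hau ?_, hbv ?_⟩
    · rw [Metric.mem_ball, Subtype.dist_eq]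
      simp only [Prod.map_fst, dist_zero_right]
      rw [norm_smul, Real.norm_of_nonneg h0.le]
      have h2 := norm_Tcone p.2
      have h3 : δ ≤ a / (2 * (r + 1)) := min_le_right _ _
      have h4 : δ * (r + 1) ≤ a / 2 := by
        calc δ * (r + 1) ≤ a / (2 * (r + 1)) * (r + 1) := by gcongr
          _ = a / 2 := by field_simp
      nlinarith [norm_nonneg (p : ℝ × ℝ)]
    · rw [← OpenPartialHomeomorph.univBall_target v0 hb]
      exact (OpenPartialHomeomorph.univBall v0 b).map_source (by simp)

lemma cone_transport (n r : ℕ) (S : Set (Euc N)) {x y : Euc N} (hxS : x ∈ S)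
    (hgerm : ∀ᶠ v in nhds (0 : Euc N), x + v ∈ S ↔ y + v ∈ S)
    (h : HasConeNbhd n r S x) : HasConeNbhd n r S y := by
  obtain ⟨U, hU, hUS, h, hapex⟩ := h
  have hxU : x ∈ U := mem_of_mem_nhdsWithin hxS hU
  have hax := hapex hxU
  set v0 := (h ⟨x, hxU⟩).2 with hv0
  have hhx : h ⟨x, hxU⟩ = (⟨0, zero_mem_Tcone r⟩, v0) := by
    ext1
    · exact Subtype.ext hax
    · rfl
  have hgx : ∀ᶠ z in nhds x, z ∈ S ↔ z + (y - x) ∈ S := by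
    have : Tendsto (fun z => z - x) (nhds x) (nhds 0) := by
      have : Continuous (fun z : Euc N => z - x) := by fun_prop
      simpa using this.tendsto x
    filter_upwards [this.eventually hgerm] with z hz
    have e1 : x + (z - x) = z := by abel
    have e2 : y + (z - x) = z + (y - x) := by abel
    rwa [e1, e2] at hz
  have hO : h.symm ⁻¹' {u : U | ((u : Euc N) ∈ S ↔ (u : Euc N) + (y - x) ∈ S)} ∈
      nhds ((⟨0, zero_mem_Tcone r⟩ : Tcone r), v0) := by
    rw [← hhx]
    apply h.symm.continuous.continuousAt
    rw [h.symm_apply_apply]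
    have hval : Tendsto (Subtype.val : U → Euc N) (nhds ⟨x, hxU⟩) (nhds x) :=
      continuous_subtype_val.continuousAt
    exact hval.eventually hgx
  obtain ⟨g, hg, hg0, hgO⟩ := shrink r (n - 1) v0 _ hO
  have hφ : Topology.IsEmbedding (fun q => ((h.symm (g q) : U) : Euc N) + (y - x)) :=
    ((Homeomorph.addRight (y - x)).isEmbedding.comp Topology.IsEmbedding.subtypeVal).comp
      (h.symm.isEmbedding.comp hg.isEmbedding)
  set φ := (fun q => ((h.symm (g q) : U) : Euc N) + (y - x)) with hφdef
  have hφ0 : φ (⟨0, zero_mem_Tcone r⟩, 0) = y := by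
    rw [hφdef]
    simp only [hg0]
    rw [← hhx, h.symm_apply_apply]
    simp
  refine ⟨Set.range φ, ?_, ?_, hφ.toHomeomorph.symm, ?_⟩
  · -- neighbourhood
    have hopen : IsOpen (Set.range (fun q => h.symm (g q))) :=
      (h.symm.isOpenEmbedding.comp hg).isOpen_range
    obtain ⟨O, hOo, hOr⟩ := isOpen_induced_iff.1 hopen
    have hxO : x ∈ O := by
      have : (⟨x, hxU⟩ : U) ∈ Subtype.val ⁻¹' O := by
        rw [hOr]
        refine ⟨(⟨0, zero_mem_Tcone r⟩, 0), ?_⟩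
        simp only [hg0]
        rw [← hhx, h.symm_apply_apply]
      exact this
    have hev : ∀ᶠ z in nhds x, z ∈ S → z ∈ U := mem_nhdsWithin_iff_eventually.1 hU
    have hT : Tendsto (fun z => z - (y - x)) (nhds y) (nhds x) := by
      have : Continuous (fun z : Euc N => z - (y - x)) := by fun_prop
      simpa using this.tendsto y
    rw [mem_nhdsWithin_iff_eventually]
    filter_upwards [hT.eventually hev, hT.eventually hgx, hT.eventually (hOo.mem_nhds hxO)]
      with z h1 h2 h3 hzS
    rw [sub_add_cancel] at h2
    have hzU := h1 (h2.2 hzS)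
    have : (⟨z - (y - x), hzU⟩ : U) ∈ Set.range (fun q => h.symm (g q)) := by
      rw [← hOr]; exact h3
    obtain ⟨q, hq⟩ := this
    refine ⟨q, ?_⟩
    rw [hφdef]
    simp only [hq]
    abel
  · rintro _ ⟨q, rfl⟩
    exact (hgO q).1 (hUS (h.symm (g q)).2)
  · intro hy
    have : (⟨y, hy⟩ : Set.range φ) = hφ.toHomeomorph (⟨0, zero_mem_Tcone r⟩, 0) := by
      apply Subtype.ext
      exact hφ0.symm
    rw [this, Homeomorph.symm_apply_apply]

lemma germ_half {K : SimplicialComplex ℝ (Euc N)} (hfin : K.faces.Finite) {ρ : Finset (Euc N)}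
    (hρ : ρ ∈ K.faces) {x y : Euc N} (hx : x ∈ openSimplex ρ) (hy : y ∈ openSimplex ρ) :
    ∀ᶠ v in nhds (0 : Euc N), x + v ∈ K.space → y + v ∈ K.space := by
  have ht : ∀ z : Euc N, Tendsto (fun v => z + v) (nhds 0) (nhds z) := by
    intro z
    have : Continuous (fun v : Euc N => z + v) := by fun_prop
    simpa using this.tendsto 0
  have hpos : ∀ᶠ v in nhds (0 : Euc N), ∀ t ∈ K.faces, ρ ⊆ t → ∀ u ∈ ρ, 0 < lam t u (y + v) := by
    rw [hfin.eventually_all]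
    intro t htK
    by_cases hρt : ρ ⊆ t
    · have : ∀ᶠ v in nhds (0 : Euc N), ∀ u ∈ ρ, 0 < lam t u (y + v) := by
        rw [Filter.eventually_all_finset]
        intro u hu
        have h1 := (lam_face (face_good htK) hρt (face_good hρ) hy).1 u hu
        exact (ht y).eventually ((lam_cont u).continuousAt.eventually (lt_mem_nhds h1))
      filter_upwards [this] with v hv _
      exact hv
    · exact Filter.Eventually.of_forall fun v h => absurd h hρt
  filter_upwards [hpos, (ht x).eventually (hull_eventually hfin x)] with v h1 h2 hxv
  obtain ⟨t, htK, hxt⟩ := SimplicialComplex.mem_space_iff.1 hxv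
  have hgt := face_good htK
  have hρt : ρ ⊆ t := subset_of_open hρ htK hx (h2 t htK hxt)
  rw [SimplicialComplex.mem_space_iff]
  refine ⟨t, htK, ?_⟩
  rw [mem_convexHull_iff_lam hgt] at hxt ⊢
  obtain ⟨-, hx0, hxs⟩ := lam_face hgt hρt (face_good hρ) hx
  obtain ⟨-, hy0, hys⟩ := lam_face hgt hρt (face_good hρ) hy
  refine ⟨?_, fun u hu => ?_⟩
  · have hv : v ∈ (affineSpan ℝ (t : Set (Euc N))).direction := by
      have := AffineSubspace.vsub_mem_direction hxt.1 hxs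
      simpa using this
    rw [add_comm]
    exact AffineSubspace.vadd_mem_of_mem_direction hv hys
  · by_cases huρ : u ∈ ρ
    · exact (h1 t htK hρt u huρ).le
    · have hu' : u ∈ t \ ρ := Finset.mem_sdiff.2 ⟨hu, huρ⟩
      have e1 := lam_sub t u x (x + v)
      have e2 := lam_sub t u y (y + v)
      rw [add_sub_cancel_left] at e1 e2
      rw [hx0 u hu'] at e1
      rw [hy0 u hu'] at e2
      rw [e2, ← e1]
      exact hxt.2 u hu

lemma strRank_eq (n : ℕ) {K L : SimplicialComplex ℝ (Euc N)} (hKfin : K.faces.Finite)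
    (hsub : IsSubdivision K L) {η ρ : Finset (Euc N)} (hη : η ∈ L.faces) (hρ : ρ ∈ K.faces)
    (hηρ : openSimplex η ⊆ openSimplex ρ) : strRank n L η = strRank n K ρ := by
  have hP : (fun r : ℕ => r ≠ 2 ∧ openSimplex η ⊆ csetAux n L r) =
      (fun r : ℕ => r ≠ 2 ∧ openSimplex ρ ⊆ csetAux n K r) := by
    funext r
    have hcs : csetAux n L r = csetAux n K r := by
      unfold csetAux; rw [hsub.1]
    rw [hcs]
    apply propext
    refine and_congr_right fun _ => ⟨fun h y hy => ?_, fun h => hηρ.trans h⟩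
    have hx := centroid_mem (face_good hη)
    obtain ⟨h1, h2⟩ := h hx
    refine ⟨SimplicialComplex.convexHull_subset_space hρ (openSimplex_subset hy), ?_⟩
    refine cone_transport n r K.space h1 ?_ h2
    filter_upwards [germ_half hKfin hρ (hηρ hx) hy, germ_half hKfin hρ hy (hηρ hx)] with v a b
    exact ⟨a, b⟩
  have gen : ∀ P Q : ℕ → Prop, P = Q →
      (if h : ∃ r : ℕ, P r then (h.choose : ℝ) / 2 else 1) =
        (if h : ∃ r : ℕ, Q r then (h.choose : ℝ) / 2 else 1) := by
    rintro P Q rfl; rfl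
  exact gen _ _ hP

/-- total solid angle at a simplex -/
def totA (n : ℕ) (J : Finset (Finset (Euc N))) (τ : Finset (Euc N)) : ℝ :=
  ∑ σ ∈ J with σ.card = n + 1 ∧ τ ⊆ σ, solidAngle τ σ

/-- signed sum of stratification ranks over the star of a simplex -/
def starR (n : ℕ) (L : SimplicialComplex ℝ (Euc N)) (J : Finset (Finset (Euc N)))
    (τ : Finset (Euc N)) : ℝ :=
  ∑ η ∈ J with τ ⊆ η, (-1 : ℝ) ^ (η.card + 1) * strRank n L η

lemma defect_eq (n : ℕ) {L : SimplicialComplex ℝ (Euc N)} (hfin : L.faces.Finite)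
    (η : Finset (Euc N)) : defect n L η = strRank n L η - totA n hfin.toFinset η := by
  have hset : nSimplicesOn n L η =
      ((hfin.toFinset.filter (fun σ => σ.card = n + 1 ∧ η ⊆ σ) : Finset (Finset (Euc N))) :
        Set (Finset (Euc N))) := by
    ext σ
    simp [nSimplicesOn]
  rw [defect, totA, hset, finsum_mem_coe_finset]

lemma angle_star (n : ℕ) {L : SimplicialComplex ℝ (Euc N)} (hfin : L.faces.Finite)
    {τ : Finset (Euc N)} (hτ : τ ∈ L.faces) :
    ∑ η ∈ hfin.toFinset with τ ⊆ η, (-1 : ℝ) ^ (η.card + τ.card) * totA n hfin.toFinset η =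
      (-1 : ℝ) ^ (n + 1 + τ.card) * totA n hfin.toFinset τ := by
  simp only [totA, Finset.mul_sum]
  rw [Finset.sum_comm' (t' := hfin.toFinset.filter (fun σ => σ.card = n + 1 ∧ τ ⊆ σ))
    (s' := fun σ => σ.powerset.filter (fun η => τ ⊆ η))]
  · refine Finset.sum_congr rfl fun σ hσ => ?_
    rw [Finset.mem_filter, Set.Finite.mem_toFinset] at hσ
    rw [angle_relation (face_good hσ.1) (face_good hτ).1 hσ.2.2, hσ.2.1]
  · intro η σ
    simp only [Finset.mem_filter, Set.Finite.mem_toFinset, Finset.mem_powerset]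
    constructor
    · rintro ⟨⟨h1, h2⟩, h3, h4, h5⟩
      exact ⟨⟨h5, h2⟩, h3, h4, h2.trans h5⟩
    · rintro ⟨⟨h1, h2⟩, h3, h4, h5⟩
      exact ⟨⟨L.down_closed h3 h1 ((face_good hτ).1.mono h2), h2⟩, h3, h4, h1⟩

lemma asc_eq (n : ℕ) {L : SimplicialComplex ℝ (Euc N)} (hfin : L.faces.Finite)
    (hcard : ∀ η ∈ L.faces, η.card ≤ n + 1) {τ : Finset (Euc N)} (hτ : τ ∈ L.faces) :
    asc n L τ = (ads (τ.card - 1) : ℝ) *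
      ((strRank n L τ + (-1 : ℝ) ^ (τ.card + 1) * starR n L hfin.toFinset τ) / 2 -
        (1 + (-1 : ℝ) ^ (n + 1 + τ.card)) / 2 * totA n hfin.toFinset τ) := by
  have hpos : 0 < τ.card := Finset.card_pos.2 (face_good hτ).1
  have hsum : ∑ i ∈ Finset.Icc τ.card n, (-1 : ℝ) ^ (i - (τ.card - 1)) *
      ∑ᶠ η ∈ {η : Finset (Euc N) | η ∈ L.faces ∧ η.card = i + 1 ∧ τ ⊆ η}, defect n L η =
      ∑ η ∈ hfin.toFinset with τ ⊆ η ∧ η ≠ τ, (-1 : ℝ) ^ (η.card + τ.card) * defect n L η := by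
    rw [← Finset.sum_fiberwise_of_maps_to 
      (s := hfin.toFinset.filter (fun η => τ ⊆ η ∧ η ≠ τ))
      (t := Finset.Icc τ.card n) (g := fun η : Finset (Euc N) => η.card - 1)]
    · refine Finset.sum_congr rfl fun i hi => ?_
      rw [Finset.mem_Icc] at hi
      have hset : {η : Finset (Euc N) | η ∈ L.faces ∧ η.card = i + 1 ∧ τ ⊆ η} =
          ((hfin.toFinset.filter (fun η => τ ⊆ η ∧ η ≠ τ)).filter (fun η => η.card - 1 = i) :
            Finset (Finset (Euc N))) := by
        ext η
        simp only [Set.mem_ofPred_eq, Finset.coe_filter, Finset.mem_filter,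
          Set.Finite.mem_toFinset]
        constructor
        · rintro ⟨h1, h2, h3⟩
          refine ⟨⟨h1, h3, ?_⟩, by omega⟩
          rintro rfl
          omega
        · rintro ⟨⟨h1, h2, h3⟩, h4⟩
          exact ⟨h1, by omega, h2⟩
      rw [hset, finsum_mem_coe_finset, Finset.mul_sum]
      refine Finset.sum_congr rfl fun η hη => ?_
      simp only [Finset.mem_filter] at hη
      congr 1
      have hle := Finset.card_le_card hη.1.2.1
      have e : η.card + τ.card = (i - (τ.card - 1)) + 2 * τ.card := by omega
      rw [e, pow_add, pow_mul]
      simp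
    · intro η hη
      rw [Finset.mem_filter, Set.Finite.mem_toFinset] at hη
      have h1 := hcard η hη.1
      have h2 : τ.card < η.card :=
        Finset.card_lt_card (Finset.ssubset_iff_subset_ne.2 ⟨hη.2.1, fun h => hη.2.2 h.symm⟩)
      rw [Finset.mem_Icc]
      omega
  have hall : ∑ η ∈ hfin.toFinset with τ ⊆ η, (-1 : ℝ) ^ (η.card + τ.card) * defect n L η =
      defect n L τ + ∑ η ∈ hfin.toFinset with τ ⊆ η ∧ η ≠ τ,
        (-1 : ℝ) ^ (η.card + τ.card) * defect n L η := by
    have : hfin.toFinset.filter (fun η => τ ⊆ η) =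
        insert τ (hfin.toFinset.filter (fun η => τ ⊆ η ∧ η ≠ τ)) := by
      ext η
      simp only [Finset.mem_filter, Finset.mem_insert, Set.Finite.mem_toFinset]
      constructor
      · rintro ⟨h1, h2⟩
        by_cases h : η = τ
        · exact Or.inl h
        · exact Or.inr ⟨h1, h2, h⟩
      · rintro (rfl | ⟨h1, h2, -⟩)
        · exact ⟨hτ, subset_rfl⟩
        · exact ⟨h1, h2⟩
    rw [this, Finset.sum_insert (by simp), ← two_mul, pow_mul]
    simp
  have hsplit : ∑ η ∈ hfin.toFinset with τ ⊆ η, (-1 : ℝ) ^ (η.card + τ.card) * defect n L η =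
      (-1 : ℝ) ^ (τ.card + 1) * starR n L hfin.toFinset τ -
        (-1 : ℝ) ^ (n + 1 + τ.card) * totA n hfin.toFinset τ := by
    rw [← angle_star n hfin hτ, starR, Finset.mul_sum, ← Finset.sum_sub_distrib]
    refine Finset.sum_congr rfl fun η _ => ?_
    rw [defect_eq n hfin, mul_sub, ← mul_assoc]
    have e : (-1 : ℝ) ^ (τ.card + 1) * (-1) ^ (η.card + 1) = (-1) ^ (η.card + τ.card) := by
      ring
    rw [e]
  rw [asc, hsum]
  have h1 := hall.symm.trans hsplit
  have h2 : ∑ η ∈ hfin.toFinset with τ ⊆ η ∧ η ≠ τ,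
        (-1 : ℝ) ^ (η.card + τ.card) * defect n L η =
      (-1 : ℝ) ^ (τ.card + 1) * starR n L hfin.toFinset τ -
        (-1 : ℝ) ^ (n + 1 + τ.card) * totA n hfin.toFinset τ - defect n L τ := by
    linarith
  rw [h2, defect_eq n hfin]
  ring

/-- grouping the simplices of the subdivision by their carriers -/
lemma group_carrier {K L : SimplicialComplex ℝ (Euc N)} (hKfin : K.faces.Finite)
    (hLfin : L.faces.Finite) (hsub : IsSubdivision K L) {τ ζ : Finset (Euc N)}
    (hτ : τ ∈ L.faces) (hζ : ζ ∈ K.faces) (hcont : openSimplex τ ⊆ openSimplex ζ)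
    (f : Finset (Euc N) → ℝ) :
    ∑ η ∈ hLfin.toFinset with τ ⊆ η, f η =
      ∑ ρ ∈ hKfin.toFinset with ζ ⊆ ρ,
        ∑ η ∈ hLfin.toFinset with τ ⊆ η ∧ openSimplex η ⊆ openSimplex ρ, f η := by
  have hc : ∀ η, ∃ ρ, η ∈ L.faces → ρ ∈ K.faces ∧ openSimplex η ⊆ openSimplex ρ := by
    intro η
    by_cases hη : η ∈ L.faces
    · obtain ⟨ρ, h1, h2⟩ := hsub.2 η hη
      exact ⟨ρ, fun _ => ⟨h1, h2⟩⟩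
    · exact ⟨∅, fun h => absurd h hη⟩
  choose c hc using hc
  have hx := centroid_mem (face_good hτ)
  rw [← Finset.sum_fiberwise_of_maps_to (t := hKfin.toFinset.filter (fun ρ => ζ ⊆ ρ)) (g := c)]
  · refine Finset.sum_congr rfl fun ρ hρ => ?_
    rw [Finset.mem_filter, Set.Finite.mem_toFinset] at hρ
    rw [Finset.filter_filter]
    refine Finset.sum_congr ?_ fun _ _ => rfl
    ext η
    simp only [Finset.mem_filter, Set.Finite.mem_toFinset]
    constructor
    · rintro ⟨h1, h2, rfl⟩
      exact ⟨h1, h2, (hc η h1).2⟩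
    · rintro ⟨h1, h2, h3⟩
      have hz := centroid_mem (face_good h1)
      exact ⟨h1, h2, open_unique (hc η h1).1 hρ.1 ((hc η h1).2 hz) (h3 hz)⟩
  · intro η hη
    rw [Finset.mem_filter, Set.Finite.mem_toFinset] at hη
    rw [Finset.mem_filter, Set.Finite.mem_toFinset]
    exact ⟨(hc η hη.1).1, carrier_iff hζ hη.1 (hc η hη.1).1 hx (hcont hx) hη.2 (hc η hη.1).2⟩

lemma starR_eq (n : ℕ) {K L : SimplicialComplex ℝ (Euc N)} (hKfin : K.faces.Finite)
    (hLfin : L.faces.Finite) (hsub : IsSubdivision K L) {τ ζ : Finset (Euc N)}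
    (hτ : τ ∈ L.faces) (hζ : ζ ∈ K.faces) (hcont : openSimplex τ ⊆ openSimplex ζ) :
    starR n L hLfin.toFinset τ = starR n K hKfin.toFinset ζ := by
  rw [starR, group_carrier hKfin hLfin hsub hτ hζ hcont, starR]
  refine Finset.sum_congr rfl fun ρ hρ => ?_
  rw [Finset.mem_filter, Set.Finite.mem_toFinset] at hρ
  have hx := centroid_mem (face_good hτ)
  rw [← local_euler hLfin hsub hτ hρ.1 hx (convexHull_mono (by exact_mod_cast hρ.2)
    (openSimplex_subset (hcont hx))), Finset.sum_mul]
  refine Finset.sum_congr rfl fun η hη => ?_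
  rw [Finset.mem_filter, Set.Finite.mem_toFinset] at hη
  rw [strRank_eq n hKfin hsub hη.1 hρ.1 hη.2.2]

lemma totA_eq (n : ℕ) {K L : SimplicialComplex ℝ (Euc N)} (hKfin : K.faces.Finite)
    (hLfin : L.faces.Finite) (hcard : ∀ ρ ∈ K.faces, ρ.card ≤ n + 1)
    (hsub : IsSubdivision K L) {τ ζ : Finset (Euc N)}
    (hτ : τ ∈ L.faces) (hζ : ζ ∈ K.faces) (hcont : openSimplex τ ⊆ openSimplex ζ) :
    totA n hLfin.toFinset τ = totA n hKfin.toFinset ζ := by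
  have h1 : ∀ (J : Finset (Finset (Euc N))) (α : Finset (Euc N)), totA n J α =
      ∑ σ ∈ J with α ⊆ σ, if σ.card = n + 1 then solidAngle α σ else 0 := by
    intro J α
    rw [totA, ← Finset.sum_filter, Finset.filter_filter]
    refine Finset.sum_congr ?_ fun _ _ => rfl
    ext σ
    simp only [Finset.mem_filter]
    tauto
  rw [h1, h1, group_carrier hKfin hLfin hsub hτ hζ hcont]
  refine Finset.sum_congr rfl fun ρ hρ => ?_
  rw [Finset.mem_filter, Set.Finite.mem_toFinset] at hρ
  split_ifs with hn
  · rw [angle_add hLfin hsub hτ hζ hρ.1 hcont hρ.2, hn, ← Finset.sum_filter,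
      Finset.filter_filter]
  · apply Finset.sum_eq_zero
    intro η hη
    rw [Finset.mem_filter, Set.Finite.mem_toFinset] at hη
    rw [if_neg]
    intro h
    have h2 := card_le_of_open (face_good hη.1) (face_good hρ.1) hη.2.2
    have h3 := hcard ρ hρ.1
    omega

lemma ads_odd {m : ℕ} (hm : Odd m) : ads m = 0 := by
  have : bernoulli (m + 2) = 0 := by
    apply bernoulli_eq_zero_of_odd
    · exact hm.add_even even_two
    · omega
  rw [ads, this]
  simp

lemma asc_pair {n s p : ℕ} {K L : SimplicialComplex ℝ (Euc N)}
    (hKfin : K.faces.Finite) (hLfin : L.faces.Finite) (hdim : IsNDim n K)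
    (hsub : IsSubdivision K L)
    {τ ζ : Finset (Euc N)} (hτ : τ ∈ L.faces) (hζ : ζ ∈ K.faces)
    (hτcard : τ.card = s + 1) (hζcard : ζ.card = p + 1)
    (hcont : openSimplex τ ⊆ openSimplex ζ) :
    ∃ E E' : ℝ, asc n L τ = (ads s : ℝ) * E ∧ asc n K ζ = (ads p : ℝ) * E' ∧
      ((Even s ↔ Even p) → E = E') := by
  have hLcard : ∀ η ∈ L.faces, η.card ≤ n + 1 := by
    intro η hη
    obtain ⟨ρ, hρ, h⟩ := hsub.2 η hη
    exact (card_le_of_open (face_good hη) (face_good hρ) h).trans (hdim.1 ρ hρ)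
  have h1 := asc_eq n hLfin hLcard hτ
  have h2 := asc_eq n hKfin hdim.1 hζ
  rw [starR_eq n hKfin hLfin hsub hτ hζ hcont, totA_eq n hKfin hLfin hdim.1 hsub hτ hζ hcont,
    strRank_eq n hKfin hsub hτ hζ hcont, hτcard, Nat.add_sub_cancel] at h1
  rw [hζcard, Nat.add_sub_cancel] at h2
  refine ⟨_, _, h1, h2, fun hpar => ?_⟩
  have hpow : (-1 : ℝ) ^ s = (-1 : ℝ) ^ p := by
    by_cases hs : Even s
    · rw [hs.neg_one_pow, (hpar.1 hs).neg_one_pow]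
    · rw [(Nat.not_even_iff_odd.1 hs).neg_one_pow,
        (Nat.not_even_iff_odd.1 (fun h => hs (hpar.2 h))).neg_one_pow]
  simp only [pow_add, hpow]

/-- Subdivision invariance of ascending stratified curvature: if `L` is a
subdivision of the finite `n`-dimensional complex `K` (`n ≥ 2`), `τ` is an
`s`-simplex of `L` whose open simplex is contained in the open `p`-simplex `ζ`
of `K`, then `a_p K_a(τ) = a_s K_a(ζ)`; in particular if `s = p` then
`K_a(τ) = K_a(ζ)`. -/
theorem asc_subdivision {N n s p : ℕ} (hn : 2 ≤ n)
    (K L : SimplicialComplex ℝ (Euc N))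
    (hKfin : K.faces.Finite) (hLfin : L.faces.Finite) (hdim : IsNDim n K)
    (hsub : IsSubdivision K L)
    (τ ζ : Finset (Euc N)) (hτ : τ ∈ L.faces) (hζ : ζ ∈ K.faces)
    (hτcard : τ.card = s + 1) (hζcard : ζ.card = p + 1)
    (hcont : openSimplex τ ⊆ openSimplex ζ) :
    (ads p : ℝ) * asc n L τ = (ads s : ℝ) * asc n K ζ ∧
      (s = p → asc n L τ = asc n K ζ) := by
  obtain ⟨E, E', h1, h2, h3⟩ := asc_pair hKfin hLfin hdim hsub hτ hζ hτcard hζcard hcont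
  constructor
  · rw [h1, h2]
    by_cases hpar : (Even s ↔ Even p)
    · rw [h3 hpar]; ring
    · have : ads s = 0 ∨ ads p = 0 := by
        by_cases hs : Even s
        · right
          exact ads_odd (Nat.not_even_iff_odd.1 fun h => hpar ⟨fun _ => h, fun _ => hs⟩)
        · left
          exact ads_odd (Nat.not_even_iff_odd.1 hs)
      rcases this with h | h <;> simp [h]
  · rintro rfl
    rw [h1, h2, h3 Iff.rfl]

end AngleDefectPaper
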